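/- arXiv:1206.0411 — 3 statements merged into one kernel-verified Lean document; each statement's English description precedes it below -/
import Mathlib

section
/- The Ree group Ree(q) has order q^3 (q^3 + 1)(q - 1), and gcd(q^3 + 1, q - 1) = 2. -/
open Matrix

noncomputable section

namespace ReePaper

variable {F : Type*} [Field F] [Fintype F]

/-- The matrix `α(x)`. -/
def amat (t : ℕ) (x : F) : Matrix (Fin 7) (Fin 7) F :=
  !![1, x^t, 0, 0, -x^(3*t+1), -x^(3*t+2), x^(4*t+2);
     0, 1, x, x^(t+1), -x^(2*t+1), 0, -x^(3*t+2);
     0, 0, 1, x^t, -x^(2*t), 0, x^(3*t+1);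
     0, 0, 0, 1, x^t, 0, 0;
     0, 0, 0, 0, 1, -x, x^(t+1);
     0, 0, 0, 0, 0, 1, -x^t;
     0, 0, 0, 0, 0, 0, 1]

/-- The matrix `β(x)`. -/
def bmat (t : ℕ) (x : F) : Matrix (Fin 7) (Fin 7) F :=
  !![1, 0, -x^t, 0, -x, 0, -x^(t+1);
     0, 1, 0, x^t, 0, -x^(2*t), 0;
     0, 0, 1, 0, 0, 0, x;
     0, 0, 0, 1, 0, x^t, 0;
     0, 0, 0, 0, 1, 0, x^t;
     0, 0, 0, 0, 0, 1, 0;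
     0, 0, 0, 0, 0, 0, 1]

/-- The matrix `γ(x)`. -/
def cmat (t : ℕ) (x : F) : Matrix (Fin 7) (Fin 7) F :=
  !![1, 0, 0, -x^t, 0, -x, -x^(2*t);
     0, 1, 0, 0, -x^t, 0, x;
     0, 0, 1, 0, 0, x^t, 0;
     0, 0, 0, 1, 0, 0, -x^t;
     0, 0, 0, 0, 1, 0, 0;
     0, 0, 0, 0, 0, 1, 0;
     0, 0, 0, 0, 0, 0, 1]

/-- The diagonal matrix `h(λ)`. -/
def hmat (t : ℕ) (l : Fˣ) : Matrix (Fin 7) (Fin 7) F :=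
  Matrix.diagonal ![((l ^ (t : ℤ) : Fˣ) : F), ((l ^ (1 - (t : ℤ)) : Fˣ) : F),
    ((l ^ (2 * (t : ℤ) - 1) : Fˣ) : F), 1, ((l ^ (1 - 2 * (t : ℤ)) : Fˣ) : F),
    ((l ^ ((t : ℤ) - 1) : Fˣ) : F), ((l ^ (-(t : ℤ)) : Fˣ) : F)]

/-- The matrix `Υ`, the antidiagonal matrix with all entries `-1`. -/
def ups : Matrix (Fin 7) (Fin 7) F :=
  !![0, 0, 0, 0, 0, 0, -1;
     0, 0, 0, 0, 0, -1, 0;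
     0, 0, 0, 0, -1, 0, 0;
     0, 0, 0, -1, 0, 0, 0;
     0, 0, -1, 0, 0, 0, 0;
     0, -1, 0, 0, 0, 0, 0;
     -1, 0, 0, 0, 0, 0, 0]

/-- `S(a, b, c) = α(a) β(b) γ(c)`. -/
def Smat (t : ℕ) (a b c : F) : Matrix (Fin 7) (Fin 7) F :=
  amat t a * bmat t b * cmat t c

/-- The Ree group `Ree(q) = ⟨α(x), β(x), γ(x), h(λ), Υ⟩ ≤ GL(7, q)`. -/
def ReeGroup (t : ℕ) : Subgroup (GL (Fin 7) F) :=
  Subgroup.closure {g : GL (Fin 7) F |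
    (∃ x : F, (g : Matrix (Fin 7) (Fin 7) F) = amat t x) ∨
    (∃ x : F, (g : Matrix (Fin 7) (Fin 7) F) = bmat t x) ∨
    (∃ x : F, (g : Matrix (Fin 7) (Fin 7) F) = cmat t x) ∨
    (∃ l : Fˣ, (g : Matrix (Fin 7) (Fin 7) F) = hmat t l) ∨
    (g : Matrix (Fin 7) (Fin 7) F) = ups}

/-- The subgroup `U(q) = ⟨α(x), β(x), γ(x)⟩`. -/
def Usub (t : ℕ) : Subgroup (GL (Fin 7) F) :=
  Subgroup.closure {g : GL (Fin 7) F |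
    (∃ x : F, (g : Matrix (Fin 7) (Fin 7) F) = amat t x) ∨
    (∃ x : F, (g : Matrix (Fin 7) (Fin 7) F) = bmat t x) ∨
    (∃ x : F, (g : Matrix (Fin 7) (Fin 7) F) = cmat t x)}

/-- The subgroup `H(q) = {h(λ) : λ ∈ F_q^×}`. -/
def Hsub (t : ℕ) : Subgroup (GL (Fin 7) F) :=
  Subgroup.closure {g : GL (Fin 7) F |
    ∃ l : Fˣ, (g : Matrix (Fin 7) (Fin 7) F) = hmat t l}

end ReePaper

open ReePaper

/-!
Ree(q) preserves the octonion product of the seven-dimensional module and, up to the square root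
`Φ` of the Frobenius endomorphism, a partial product `x ∗ y` defined where `x × y = 0`. Hence it
permutes the points `⟨x⟩` for which some `y` satisfies `x × y = 0` and `x ∗ y = Φ(x)`: the Ree–Tits
ovoid. Apart from the point `⟨e₀⟩` fixed by `U(q)`, these points form one regular orbit of `U(q)`,
namely that of `⟨e₆⟩`, and a matrix that preserves both products and fixes `⟨e₀⟩` and `⟨e₆⟩` lies in
`H(q)`. Sorting the elements of the group by their action on these two points yields the Bruhat
decomposition `U H ⊔ U Υ U H` with unique factorizations, so the order is
`q³ (q - 1) + q³ · q³ (q - 1)`.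
-/

namespace ReePaper

section UnitsMulVec

variable {n R : Type*} [Fintype n] [DecidableEq n] [CommRing R] {g : GL n R}

theorem inv_mulVec_eq_iff {x y : n → R} : (g⁻¹).1 *ᵥ x = y ↔ x = g.1 *ᵥ y := by
  constructor
  · rintro rfl
    rw [mulVec_mulVec, ← Units.val_mul, mul_inv_cancel, Units.val_one, one_mulVec]
  · rintro rfl
    rw [mulVec_mulVec, ← Units.val_mul, inv_mul_cancel, Units.val_one, one_mulVec]

theorem ne_zero_of_mulVec_single [Nontrivial R] {i j : n} {c : R}
    (h : g.1 *ᵥ Pi.single i 1 = Pi.single j c) : c ≠ 0 := by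
  rintro rfl
  rw [Pi.single_zero, eq_comm, ← inv_mulVec_eq_iff, mulVec_zero, eq_comm,
    Pi.single_eq_zero_iff] at h
  exact one_ne_zero h

end UnitsMulVec

section TitsEndomorphism

variable {R : Type*} [CommSemiring R] {t : ℕ} {Φ : R →+* R}

/-- `Φ` is a square root of the Frobenius endomorphism `x ↦ x ^ 3`, inverse to `x ↦ x ^ t`. -/
structure IsTitsEndomorphism (t : ℕ) (Φ : R →+* R) : Prop where
  map_pow : ∀ x, Φ (x ^ t) = x
  map_eq : ∀ x, Φ x = (x ^ t) ^ 3

theorem IsTitsEndomorphism.pow_map (hΦ : IsTitsEndomorphism t Φ) (x : R) : Φ x ^ t = x := by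
  rw [← _root_.map_pow, hΦ.map_pow]

theorem IsTitsEndomorphism.pow_left_injective (hΦ : IsTitsEndomorphism t Φ) :
    Function.Injective fun x : R => x ^ t :=
  Function.LeftInverse.injective hΦ.map_pow

theorem isTitsEndomorphism_iterateFrobenius {F : Type*} [Field F] [Fintype F] [CharP F 3] {m : ℕ}
    (hF : Fintype.card F = 3 ^ (2 * m + 1)) :
    IsTitsEndomorphism (3 ^ m) (iterateFrobenius F 3 (m + 1)) where
  map_pow x := by
    rw [iterateFrobenius_def, ← pow_mul, ← pow_add,
      show m + (m + 1) = 2 * m + 1 by lia, ← hF, FiniteField.pow_card]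
  map_eq x := by rw [iterateFrobenius_def, pow_succ, pow_mul]

end TitsEndomorphism

section CrossProduct

variable {R : Type*} [CommRing R]

/-- The product of trace-zero octonions, in the coordinates of the given `7 × 7` matrices. -/
def cross (x y : Fin 7 → R) : Fin 7 → R :=
  let d (i j : Fin 7) : R := x i * y j - x j * y i
  ![d 0 3 + d 1 2, d 0 4 - d 1 3, -d 0 5 - d 2 3, d 0 6 - d 1 5 - d 2 4, -d 1 6 - d 3 4,
    d 2 6 - d 3 5, d 3 6 + d 4 5]

/-- The partial product in Wilson's construction of the Ree groups, in the coordinates of the given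
matrices. It is only meaningful on pairs with `cross x y = 0`. -/
def twist (x y : Fin 7 → R) : Fin 7 → R :=
  let d (i j : Fin 7) : R := x i * y j - x j * y i
  ![d 0 1, d 0 2, -d 1 4, -d 0 6 - d 1 5, -d 2 5, d 4 6, d 5 6]

theorem cross_eq_zero_iff {x y : Fin 7 → R} : cross x y = 0 ↔
    x 0 * y 3 - x 3 * y 0 + (x 1 * y 2 - x 2 * y 1) = 0 ∧
    x 0 * y 4 - x 4 * y 0 - (x 1 * y 3 - x 3 * y 1) = 0 ∧
    x 5 * y 0 - x 0 * y 5 - (x 2 * y 3 - x 3 * y 2) = 0 ∧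
    x 0 * y 6 - x 6 * y 0 - (x 1 * y 5 - x 5 * y 1) - (x 2 * y 4 - x 4 * y 2) = 0 ∧
    x 6 * y 1 - x 1 * y 6 - (x 3 * y 4 - x 4 * y 3) = 0 ∧
    x 2 * y 6 - x 6 * y 2 - (x 3 * y 5 - x 5 * y 3) = 0 ∧
    x 3 * y 6 - x 6 * y 3 + (x 4 * y 5 - x 5 * y 4) = 0 := by
  simp [cross, funext_iff, Fin.forall_fin_succ]

/-- The matrices that preserve `cross` and that preserve `twist` up to the endomorphism `Φ`. -/
def twistedG2 (Φ : R →+* R) : Subgroup (GL (Fin 7) R) where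
  carrier := {g | (∀ x y, cross (g.1 *ᵥ x) (g.1 *ᵥ y) = g.1 *ᵥ cross x y) ∧
    ∀ x y, cross x y = 0 → twist (g.1 *ᵥ x) (g.1 *ᵥ y) = g.1.map Φ *ᵥ twist x y}
  one_mem' := by simp [Matrix.map_one]
  mul_mem' := by
    rintro g h ⟨hg, hg'⟩ ⟨hh, hh'⟩
    refine ⟨fun x y => ?_, fun x y hxy => ?_⟩
    · simp only [Units.val_mul, ← mulVec_mulVec, hg, hh]
    · have hxy' : cross (h.1 *ᵥ x) (h.1 *ᵥ y) = 0 := by rw [hh, hxy, mulVec_zero]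
      simp only [Units.val_mul, ← mulVec_mulVec, Matrix.map_mul, hg' _ _ hxy', hh' _ _ hxy]
  inv_mem' := by
    rintro g ⟨hg, hg'⟩
    have cancel (x : Fin 7 → R) : g.1 *ᵥ (g⁻¹).1 *ᵥ x = x := (inv_mulVec_eq_iff.1 rfl).symm
    have hinv (x y : Fin 7 → R) : cross ((g⁻¹).1 *ᵥ x) ((g⁻¹).1 *ᵥ y) = (g⁻¹).1 *ᵥ cross x y := by
      rw [eq_comm, inv_mulVec_eq_iff, ← hg, cancel, cancel]
    refine ⟨hinv, fun x y hxy => ?_⟩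
    have hzero : cross ((g⁻¹).1 *ᵥ x) ((g⁻¹).1 *ᵥ y) = 0 := by rw [hinv, hxy, mulVec_zero]
    have htwist := hg' _ _ hzero
    rw [cancel, cancel] at htwist
    rw [htwist, mulVec_mulVec, ← Matrix.map_mul, ← Units.val_mul, inv_mul_cancel, Units.val_one,
      Matrix.map_one Φ (map_zero Φ) (map_one Φ), one_mulVec]

variable {Φ : R →+* R} {g : GL (Fin 7) R}

theorem cross_mulVec (hg : g ∈ twistedG2 Φ) (x y : Fin 7 → R) :
    cross (g.1 *ᵥ x) (g.1 *ᵥ y) = g.1 *ᵥ cross x y :=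
  hg.1 x y

theorem twist_mulVec (hg : g ∈ twistedG2 Φ) {x y : Fin 7 → R} (h : cross x y = 0) :
    twist (g.1 *ᵥ x) (g.1 *ᵥ y) = g.1.map Φ *ᵥ twist x y :=
  hg.2 x y h

/-- `x` is zero or spans a point of the Ree–Tits ovoid. -/
def IsOvoidPoint (Φ : R →+* R) (x : Fin 7 → R) : Prop :=
  ∃ y, cross x y = 0 ∧ twist x y = Φ ∘ x

theorem IsOvoidPoint.mulVec {x : Fin 7 → R} (hg : g ∈ twistedG2 Φ) (hx : IsOvoidPoint Φ x) :
    IsOvoidPoint Φ (g.1 *ᵥ x) := by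
  obtain ⟨y, hcross, htwist⟩ := hx
  refine ⟨g.1 *ᵥ y, by rw [cross_mulVec hg, hcross, mulVec_zero], ?_⟩
  rw [twist_mulVec hg hcross, htwist]
  ext i
  exact (RingHom.map_mulVec Φ g.1 x i).symm

theorem isOvoidPoint_single_zero (Φ : R →+* R) : IsOvoidPoint Φ (Pi.single 0 1) := by
  refine ⟨Pi.single 1 1, ?_, ?_⟩ <;> ext i <;> fin_cases i <;> simp [cross, twist]

theorem isOvoidPoint_single_six (Φ : R →+* R) : IsOvoidPoint Φ (Pi.single 6 1) := by
  refine ⟨-Pi.single 5 1, ?_, ?_⟩ <;> ext i <;> fin_cases i <;>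
    simp [cross, twist]

end CrossProduct

section Generators

variable {F : Type*} [Field F]

theorem amat_mulVec (t : ℕ) (a : F) (x : Fin 7 → F) :
    amat t a *ᵥ x =
      ![x 0 + a ^ t * x 1 - (a ^ t) ^ 3 * a * x 4 - (a ^ t) ^ 3 * a ^ 2 * x 5
          + (a ^ t) ^ 4 * a ^ 2 * x 6,
        x 1 + a * x 2 + a ^ t * a * x 3 - (a ^ t) ^ 2 * a * x 4 - (a ^ t) ^ 3 * a ^ 2 * x 6,
        x 2 + a ^ t * x 3 - (a ^ t) ^ 2 * x 4 + (a ^ t) ^ 3 * a * x 6,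
        x 3 + a ^ t * x 4,
        x 4 - a * x 5 + a ^ t * a * x 6,
        x 5 - a ^ t * x 6,
        x 6] := by
  ext i
  fin_cases i <;> simp [amat, mulVec, dotProduct, Fin.sum_univ_seven] <;> ring

theorem bmat_mulVec (t : ℕ) (b : F) (x : Fin 7 → F) :
    bmat t b *ᵥ x =
      ![x 0 - b ^ t * x 2 - b * x 4 - b ^ t * b * x 6,
        x 1 + b ^ t * x 3 - (b ^ t) ^ 2 * x 5,
        x 2 + b * x 6,
        x 3 + b ^ t * x 5,
        x 4 + b ^ t * x 6,
        x 5,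
        x 6] := by
  ext i
  fin_cases i <;> simp [bmat, mulVec, dotProduct, Fin.sum_univ_seven] <;> ring

theorem cmat_mulVec (t : ℕ) (c : F) (x : Fin 7 → F) :
    cmat t c *ᵥ x =
      ![x 0 - c ^ t * x 3 - c * x 5 - (c ^ t) ^ 2 * x 6,
        x 1 - c ^ t * x 4 + c * x 6,
        x 2 + c ^ t * x 5,
        x 3 - c ^ t * x 6,
        x 4,
        x 5,
        x 6] := by
  ext i
  fin_cases i <;> simp [cmat, mulVec, dotProduct, Fin.sum_univ_seven] <;> ring

theorem hmat_eq_diagonal (t : ℕ) (l : Fˣ) :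
    hmat t l = diagonal ![(l : F) ^ t, l / l ^ t, (l ^ t) ^ 2 / l, 1, l / (l ^ t) ^ 2,
      l ^ t / l, ((l : F) ^ t)⁻¹] := by
  have hl : (l : F) ≠ 0 := l.ne_zero
  rw [hmat]
  congr 1
  ext i
  fin_cases i <;> simp [zpow_sub₀ hl, mul_comm (2 : ℤ), _root_.zpow_mul,
    _root_.zpow_ofNat]

theorem hmat_mulVec (t : ℕ) (l : Fˣ) (x : Fin 7 → F) :
    hmat t l *ᵥ x =
      ![(l : F) ^ t * x 0, l / l ^ t * x 1, (l ^ t) ^ 2 / l * x 2, x 3, l / (l ^ t) ^ 2 * x 4,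
        l ^ t / l * x 5, ((l : F) ^ t)⁻¹ * x 6] := by
  rw [hmat_eq_diagonal]
  ext i
  rw [mulVec_diagonal]
  fin_cases i <;> simp

theorem ups_mulVec (x : Fin 7 → F) :
    ups *ᵥ x = ![-x 6, -x 5, -x 4, -x 3, -x 2, -x 1, -x 0] := by
  ext i
  fin_cases i <;> simp [ups, mulVec, dotProduct, Fin.sum_univ_seven]

theorem ups_mul_ups : (ups * ups : Matrix (Fin 7) (Fin 7) F) = 1 := by
  refine ext_of_mulVec_single fun i => ?_
  rw [← mulVec_mulVec, ups_mulVec, ups_mulVec, one_mulVec]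
  ext j
  fin_cases j <;> simp

theorem map_amat (Φ : F →+* F) (t : ℕ) (a : F) : (amat t a).map Φ = amat t (Φ a) := by
  ext i j
  fin_cases i <;> fin_cases j <;> simp [amat]

theorem map_bmat (Φ : F →+* F) (t : ℕ) (b : F) : (bmat t b).map Φ = bmat t (Φ b) := by
  ext i j
  fin_cases i <;> fin_cases j <;> simp [bmat]

theorem map_cmat (Φ : F →+* F) (t : ℕ) (c : F) : (cmat t c).map Φ = cmat t (Φ c) := by
  ext i j
  fin_cases i <;> fin_cases j <;> simp [cmat]

theorem map_hmat (Φ : F →+* F) (t : ℕ) (l : Fˣ) :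
    (hmat t l).map Φ = hmat t (Units.map Φ l) := by
  rw [hmat_eq_diagonal, hmat_eq_diagonal, diagonal_map (map_zero Φ)]
  congr 1
  ext i
  fin_cases i <;> simp

theorem map_ups (Φ : F →+* F) : (ups : Matrix (Fin 7) (Fin 7) F).map Φ = ups := by
  ext i j
  fin_cases i <;> fin_cases j <;> simp [ups]

theorem cross_hmat (t : ℕ) (l : Fˣ) (x y : Fin 7 → F) :
    cross (hmat t l *ᵥ x) (hmat t l *ᵥ y) = hmat t l *ᵥ cross x y := by
  have hl : (l : F) ≠ 0 := l.ne_zero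
  simp only [hmat_mulVec]
  ext i
  fin_cases i <;> simp [cross] <;> field_simp

theorem cross_ups (x y : Fin 7 → F) : cross (ups *ᵥ x) (ups *ᵥ y) = ups *ᵥ cross x y := by
  simp only [ups_mulVec]
  ext i
  fin_cases i <;> simp [cross] <;> ring

theorem twist_ups (x y : Fin 7 → F) : twist (ups *ᵥ x) (ups *ᵥ y) = ups *ᵥ twist x y := by
  simp only [ups_mulVec, twist]
  ext i
  fin_cases i <;> dsimp <;> ring

theorem det_amat (t : ℕ) (a : F) : (amat t a).det = 1 := by
  rw [det_of_isUpperTriangular]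
  · simp [amat, Fin.prod_univ_seven]
  · intro i j h
    fin_cases i <;> fin_cases j <;> simp_all [amat]

theorem det_bmat (t : ℕ) (b : F) : (bmat t b).det = 1 := by
  rw [det_of_isUpperTriangular]
  · simp [bmat, Fin.prod_univ_seven]
  · intro i j h
    fin_cases i <;> fin_cases j <;> simp_all [bmat]

theorem det_cmat (t : ℕ) (c : F) : (cmat t c).det = 1 := by
  rw [det_of_isUpperTriangular]
  · simp [cmat, Fin.prod_univ_seven]
  · intro i j h
    fin_cases i <;> fin_cases j <;> simp_all [cmat]

theorem det_hmat_ne_zero (t : ℕ) (l : Fˣ) : (hmat t l).det ≠ 0 := by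
  simp [hmat, det_diagonal, Fin.prod_univ_seven, _root_.zpow_ne_zero]

/-- `α(a)` as an element of the general linear group. -/
def alpha (t : ℕ) (a : F) : GL (Fin 7) F :=
  .mkOfDetNeZero (amat t a) (by simp [det_amat])

/-- `β(b)` as an element of the general linear group. -/
def beta (t : ℕ) (b : F) : GL (Fin 7) F :=
  .mkOfDetNeZero (bmat t b) (by simp [det_bmat])

/-- `γ(c)` as an element of the general linear group. -/
def gamma (t : ℕ) (c : F) : GL (Fin 7) F :=
  .mkOfDetNeZero (cmat t c) (by simp [det_cmat])

/-- `S(a, b, c)` as an element of the general linear group. -/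
def unipotent (t : ℕ) (p : F × F × F) : GL (Fin 7) F :=
  alpha t p.1 * beta t p.2.1 * gamma t p.2.2

/-- `h(λ)` as an element of the general linear group. -/
def torus (t : ℕ) (l : Fˣ) : GL (Fin 7) F :=
  .mkOfDetNeZero (hmat t l) (det_hmat_ne_zero t l)

/-- `Υ` as an element of the general linear group. -/
def upsilon : GL (Fin 7) F :=
  ⟨ups, ups, ups_mul_ups, ups_mul_ups⟩

theorem unipotent_mem_ReeGroup (t : ℕ) (p : F × F × F) : unipotent t p ∈ ReeGroup t :=
  mul_mem (mul_mem (Subgroup.subset_closure (.inl ⟨p.1, rfl⟩))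
    (Subgroup.subset_closure (.inr (.inl ⟨p.2.1, rfl⟩))))
    (Subgroup.subset_closure (.inr (.inr (.inl ⟨p.2.2, rfl⟩))))

theorem torus_mem_ReeGroup (t : ℕ) (l : Fˣ) : torus t l ∈ ReeGroup t :=
  Subgroup.subset_closure (.inr (.inr (.inr (.inl ⟨l, rfl⟩))))

theorem upsilon_mem_ReeGroup (t : ℕ) : (upsilon : GL (Fin 7) F) ∈ ReeGroup t :=
  Subgroup.subset_closure (.inr (.inr (.inr (.inr rfl))))

end Generators

section CharThree

variable {F : Type*} [Field F] {t : ℕ} {Φ : F →+* F}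

theorem twist_hmat (hΦ : IsTitsEndomorphism t Φ) (l : Fˣ) (x y : Fin 7 → F) :
    twist (hmat t l *ᵥ x) (hmat t l *ᵥ y) = (hmat t l).map Φ *ᵥ twist x y := by
  have hl : (l : F) ≠ 0 := l.ne_zero
  simp only [map_hmat, hmat_mulVec, Units.coe_map, MonoidHom.coe_coe, hΦ.pow_map]
  rw [hΦ.map_eq]
  ext i
  fin_cases i <;> simp [twist] <;> field_simp

variable [CharP F 3]

theorem cross_amat (t : ℕ) (a : F) (x y : Fin 7 → F) :
    cross (amat t a *ᵥ x) (amat t a *ᵥ y) = amat t a *ᵥ cross x y := by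
  simp only [amat_mulVec]
  ext i
  fin_cases i <;> simp [cross] <;> grind

theorem cross_bmat (t : ℕ) (b : F) (x y : Fin 7 → F) :
    cross (bmat t b *ᵥ x) (bmat t b *ᵥ y) = bmat t b *ᵥ cross x y := by
  simp only [bmat_mulVec]
  ext i
  fin_cases i <;> simp [cross] <;> grind

theorem cross_cmat (t : ℕ) (c : F) (x y : Fin 7 → F) :
    cross (cmat t c *ᵥ x) (cmat t c *ᵥ y) = cmat t c *ᵥ cross x y := by
  simp only [cmat_mulVec]
  ext i
  fin_cases i <;> simp [cross] <;> grind

theorem twist_amat (hΦ : IsTitsEndomorphism t Φ) (a : F) {x y : Fin 7 → F} (h : cross x y = 0) :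
    twist (amat t a *ᵥ x) (amat t a *ᵥ y) = (amat t a).map Φ *ᵥ twist x y := by
  simp only [map_amat, amat_mulVec, hΦ.pow_map]
  rw [hΦ.map_eq]
  generalize a ^ t = A
  rw [cross_eq_zero_iff] at h
  ext i
  fin_cases i <;> simp [twist] <;> grind

theorem twist_bmat (hΦ : IsTitsEndomorphism t Φ) (b : F) {x y : Fin 7 → F} (h : cross x y = 0) :
    twist (bmat t b *ᵥ x) (bmat t b *ᵥ y) = (bmat t b).map Φ *ᵥ twist x y := by
  simp only [map_bmat, bmat_mulVec, hΦ.pow_map]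
  rw [hΦ.map_eq]
  generalize b ^ t = B
  rw [cross_eq_zero_iff] at h
  ext i
  fin_cases i <;> simp [twist] <;> grind

theorem twist_cmat (hΦ : IsTitsEndomorphism t Φ) (c : F) {x y : Fin 7 → F} (h : cross x y = 0) :
    twist (cmat t c *ᵥ x) (cmat t c *ᵥ y) = (cmat t c).map Φ *ᵥ twist x y := by
  simp only [map_cmat, cmat_mulVec, hΦ.pow_map]
  rw [hΦ.map_eq]
  generalize c ^ t = C
  rw [cross_eq_zero_iff] at h
  ext i
  fin_cases i <;> simp [twist] <;> grind

theorem ReeGroup_le_twistedG2 (hΦ : IsTitsEndomorphism t Φ) : ReeGroup t ≤ twistedG2 Φ := by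
  refine (Subgroup.closure_le _).2 ?_
  rintro g (⟨a, hg⟩ | ⟨b, hg⟩ | ⟨c, hg⟩ | ⟨l, hg⟩ | hg) <;>
    refine ⟨?_, fun x y h => ?_⟩ <;> rw [hg]
  · exact cross_amat t a
  · exact twist_amat hΦ a h
  · exact cross_bmat t b
  · exact twist_bmat hΦ b h
  · exact cross_cmat t c
  · exact twist_cmat hΦ c h
  · exact cross_hmat t l
  · exact twist_hmat hΦ l x y
  · exact cross_ups
  · rw [map_ups, twist_ups]

end CharThree

section OvoidPoints

variable {F : Type*} [Field F] {Φ : F →+* F} {x : Fin 7 → F}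

theorem isOvoidPoint_iff : IsOvoidPoint Φ x ↔ ∃ y, cross x y = 0 ∧
    x 0 * y 1 - x 1 * y 0 = Φ (x 0) ∧
    x 0 * y 2 - x 2 * y 0 = Φ (x 1) ∧
    x 4 * y 1 - x 1 * y 4 = Φ (x 2) ∧
    x 6 * y 0 - x 0 * y 6 - (x 1 * y 5 - x 5 * y 1) = Φ (x 3) ∧
    x 5 * y 2 - x 2 * y 5 = Φ (x 4) ∧
    x 4 * y 6 - x 6 * y 4 = Φ (x 5) ∧
    x 5 * y 6 - x 6 * y 5 = Φ (x 6) := by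
  simp [IsOvoidPoint, twist, funext_iff, Fin.forall_fin_succ]

/-- The point at infinity is the only ovoid point on its tangent hyperplane. -/
theorem IsOvoidPoint.eq_single_zero (hx : IsOvoidPoint Φ x) (h6 : x 6 = 0) :
    x = Pi.single 0 (x 0) := by
  obtain ⟨y, hcross, htwist⟩ := isOvoidPoint_iff.1 hx
  rw [cross_eq_zero_iff] at hcross
  have eq_zero (i : Fin 7) (h : x i ≠ 0 → Φ (x i) = 0) : x i = 0 :=
    not_not.1 fun hi => hi ((map_eq_zero Φ).1 (h hi))
  have h5 : x 5 = 0 := eq_zero 5 (by grind [map_zero Φ])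
  have h4 : x 4 = 0 := eq_zero 4 (by grind [map_zero Φ])
  have h3 : x 3 = 0 := eq_zero 3 (by grind [map_zero Φ])
  have h2 : x 2 = 0 := eq_zero 2 (by grind [map_zero Φ])
  have h1 : x 1 = 0 := eq_zero 1 (by grind [map_zero Φ])
  ext i
  fin_cases i <;> simp [h1, h2, h3, h4, h5, h6]

theorem IsOvoidPoint.eq_single_six [NeZero (2 : F)] (hx : IsOvoidPoint Φ x) (h3 : x 3 = 0)
    (h4 : x 4 = 0) (h5 : x 5 = 0) (h6 : x 6 ≠ 0) : x = Pi.single 6 (x 6) := by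
  obtain ⟨y, hcross, htwist⟩ := isOvoidPoint_iff.1 hx
  rw [cross_eq_zero_iff] at hcross
  have hΦ6 : Φ (x 6) ≠ 0 := (map_ne_zero Φ).2 h6
  have hy5 : y 5 ≠ 0 := by grind
  have hy4 : y 4 = 0 := by grind [map_zero Φ]
  have h2 : x 2 = 0 := by grind [map_zero Φ]
  have h1 : x 1 = 0 := by
    have htwo : (2 : F) ≠ 0 := two_ne_zero
    grind [map_zero Φ]
  have h0 : x 0 = 0 := by grind [map_zero Φ]
  ext i
  fin_cases i <;> simp [h0, h1, h2, h3, h4, h5]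

end OvoidPoints

section BasisProducts

variable {R : Type*} [CommRing R] (a b : R) (y : Fin 7 → R)

theorem cross_single_zero :
    cross (Pi.single 0 a) y = ![a * y 3, a * y 4, -(a * y 5), a * y 6, 0, 0, 0] := by
  ext i; fin_cases i <;> simp [cross]

theorem cross_single_six :
    cross (Pi.single 6 b) y = ![0, 0, 0, -(b * y 0), b * y 1, -(b * y 2), -(b * y 3)] := by
  ext i; fin_cases i <;> simp [cross]

theorem twist_single_zero :
    twist (Pi.single 0 a) y = ![a * y 1, a * y 2, 0, -(a * y 6), 0, 0, 0] := by
  ext i; fin_cases i <;> simp [twist]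

theorem cross_single_zero_zero : cross (Pi.single 0 a) (Pi.single 0 b) = 0 := by
  ext i; fin_cases i <;> simp [cross_single_zero]

theorem cross_single_zero_one : cross (Pi.single 0 a) (Pi.single 1 b) = 0 := by
  ext i; fin_cases i <;> simp [cross_single_zero]

theorem cross_single_zero_three :
    cross (Pi.single 0 a) (Pi.single 3 b) = Pi.single 0 (a * b) := by
  ext i; fin_cases i <;> simp [cross_single_zero]

theorem cross_single_zero_four :
    cross (Pi.single 0 a) (Pi.single 4 b) = Pi.single 1 (a * b) := by
  ext i; fin_cases i <;> simp [cross_single_zero]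

theorem cross_single_zero_five :
    cross (Pi.single 0 a) (Pi.single 5 b) = Pi.single 2 (-(a * b)) := by
  ext i; fin_cases i <;> simp [cross_single_zero]

theorem cross_single_zero_six :
    cross (Pi.single 0 a) (Pi.single 6 b) = Pi.single 3 (a * b) := by
  ext i; fin_cases i <;> simp [cross_single_zero]

theorem cross_single_six_one :
    cross (Pi.single 6 b) (Pi.single 1 a) = Pi.single 4 (b * a) := by
  ext i; fin_cases i <;> simp [cross_single_six]

theorem twist_single_zero_one :
    twist (Pi.single 0 a) (Pi.single 1 b) = Pi.single 0 (a * b) := by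
  ext i; fin_cases i <;> simp [twist_single_zero]

end BasisProducts

section TwoPointStabilizer

variable {F : Type*} [Field F] {t : ℕ} {Φ : F →+* F} {g : GL (Fin 7) F} {a b : F}

theorem mulVec_single_three (hg : g ∈ twistedG2 Φ) (h0 : g.1 *ᵥ Pi.single 0 1 = Pi.single 0 a)
    (h6 : g.1 *ᵥ Pi.single 6 1 = Pi.single 6 b) :
    g.1 *ᵥ Pi.single 3 1 = Pi.single 3 (a * b) := by
  have h := cross_mulVec hg (Pi.single 0 1) (Pi.single 6 1)
  rw [h0, h6, cross_single_zero_six, cross_single_zero_six, one_mul] at h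
  exact h.symm

theorem apply_six_ne_zero (hg : g ∈ twistedG2 Φ) (h0 : g.1 *ᵥ Pi.single 0 1 = Pi.single 0 a) :
    (g.1 *ᵥ Pi.single 6 1) 6 ≠ 0 := by
  intro h
  have h3 := cross_mulVec hg (Pi.single 0 1) (Pi.single 6 1)
  rw [h0, ((isOvoidPoint_single_six Φ).mulVec hg).eq_single_zero h, cross_single_zero_six,
    cross_single_zero_zero, one_mul] at h3
  exact ne_zero_of_mulVec_single (h3.symm.trans (Pi.single_zero 0).symm) rfl

theorem mul_eq_one_of_mulVec_single (hg : g ∈ twistedG2 Φ)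
    (h0 : g.1 *ᵥ Pi.single 0 1 = Pi.single 0 a) (h6 : g.1 *ᵥ Pi.single 6 1 = Pi.single 6 b) :
    a * b = 1 := by
  have h := cross_mulVec hg (Pi.single 0 1) (Pi.single 3 1)
  rw [h0, mulVec_single_three hg h0 h6, cross_single_zero_three, cross_single_zero_three, one_mul,
    h0] at h
  exact mul_left_cancel₀ (ne_zero_of_mulVec_single h0) (by simpa using congrFun h 0)

theorem mulVec_single_one_eq [NeZero (2 : F)] (hg : g ∈ twistedG2 Φ)
    (h0 : g.1 *ᵥ Pi.single 0 1 = Pi.single 0 a) (h6 : g.1 *ᵥ Pi.single 6 1 = Pi.single 6 b) :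
    g.1 *ᵥ Pi.single 1 1 = Pi.single 1 (Φ a / a) := by
  have ha : a ≠ 0 := ne_zero_of_mulVec_single h0
  have hab : a * b = 1 := mul_eq_one_of_mulVec_single hg h0 h6
  have hcross := cross_mulVec hg (Pi.single 0 1) (Pi.single 1 1)
  have htwist := twist_mulVec hg (cross_single_zero_one (1 : F) 1)
  have h4 : g.1 *ᵥ Pi.single 4 1 = cross (Pi.single 6 b) (g.1 *ᵥ Pi.single 1 1) := by
    rw [← h6, cross_mulVec hg, cross_single_six_one, one_mul]
  have h1 : g.1 *ᵥ Pi.single 1 1 =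
      cross (Pi.single 0 a) (cross (Pi.single 6 b) (g.1 *ᵥ Pi.single 1 1)) := by
    rw [← h4, ← h0, cross_mulVec hg, cross_single_zero_four, one_mul]
  have hΦ0 : g.1.map Φ *ᵥ Pi.single 0 1 = Pi.single 0 (Φ a) := by
    rw [mulVec_single_one] at h0 ⊢
    ext i
    simpa [Pi.single_apply, apply_ite Φ] using congrArg Φ (congrFun h0 i)
  rw [h0, cross_single_zero_one, mulVec_zero, cross_single_zero] at hcross
  rw [h0, twist_single_zero_one, one_mul, hΦ0, twist_single_zero] at htwist
  generalize g.1 *ᵥ Pi.single 1 1 = y at *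
  have hy0 : y 0 = 0 := by
    have hneg : y 0 = a * -(b * y 0) := by
      simpa [cross_single_zero, cross_single_six] using congrFun h1 0
    have htwo : (2 : F) ≠ 0 := two_ne_zero
    grind
  have hy1 : y 1 = Φ a / a := by
    rw [eq_div_iff ha, mul_comm]
    simpa using congrFun htwist 0
  have hy2 : y 2 = 0 := by simpa [ha] using congrFun htwist 1
  have hy3 : y 3 = 0 := by simpa [ha] using congrFun hcross 0
  have hy4 : y 4 = 0 := by simpa [ha] using congrFun hcross 1
  have hy5 : y 5 = 0 := by simpa [ha] using congrFun hcross 2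
  have hy6 : y 6 = 0 := by simpa [ha] using congrFun hcross 3
  ext i
  fin_cases i <;> simp [hy0, hy1, hy2, hy3, hy4, hy5, hy6]

theorem upsilon_mem_twistedG2 (Φ : F →+* F) : upsilon ∈ twistedG2 Φ :=
  ⟨cross_ups, fun x y _ => by simp only [upsilon, map_ups, twist_ups]⟩

theorem ups_mulVec_single (i : Fin 7) (c : F) : ups *ᵥ Pi.single i c = Pi.single i.rev (-c) := by
  rw [ups_mulVec]
  ext j
  fin_cases i <;> fin_cases j <;> simp [Fin.rev]

theorem upsilon_mul_upsilon : (upsilon * upsilon : GL (Fin 7) F) = 1 :=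
  Units.ext ups_mul_ups

theorem upsilon_conj_mulVec_single {i j : Fin 7} {c : F}
    (h : g.1 *ᵥ Pi.single i 1 = Pi.single j c) :
    (upsilon * g * upsilon).1 *ᵥ Pi.single i.rev 1 = Pi.single j.rev c := by
  simp only [Units.val_mul, upsilon, ← mulVec_mulVec, ups_mulVec_single, Fin.rev_rev, Pi.single_neg,
    mulVec_neg, h, neg_neg]

theorem mulVec_single_five_eq [NeZero (2 : F)] (hg : g ∈ twistedG2 Φ)
    (h0 : g.1 *ᵥ Pi.single 0 1 = Pi.single 0 a) (h6 : g.1 *ᵥ Pi.single 6 1 = Pi.single 6 b) :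
    g.1 *ᵥ Pi.single 5 1 = Pi.single 5 (Φ b / b) := by
  have hΥ := upsilon_mem_twistedG2 Φ
  have h1 := mulVec_single_one_eq (mul_mem (mul_mem hΥ hg) hΥ)
    (upsilon_conj_mulVec_single h6) (upsilon_conj_mulVec_single h0)
  have hconj : upsilon * (upsilon * g * upsilon) * upsilon = g := by
    rw [← mul_assoc, ← mul_assoc, upsilon_mul_upsilon, one_mul, mul_assoc, upsilon_mul_upsilon,
      mul_one]
  rw [← hconj]
  exact upsilon_conj_mulVec_single h1

theorem exists_eq_torus [NeZero (2 : F)] (hΦ : IsTitsEndomorphism t Φ) (hg : g ∈ twistedG2 Φ)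
    (h0 : g.1 *ᵥ Pi.single 0 1 = Pi.single 0 a) (h6 : g.1 *ᵥ Pi.single 6 1 = Pi.single 6 b) :
    ∃ l, g = torus t l := by
  have ha : a ≠ 0 := ne_zero_of_mulVec_single h0
  have hab : a * b = 1 := mul_eq_one_of_mulVec_single hg h0 h6
  obtain rfl : b = a⁻¹ := eq_inv_of_mul_eq_one_right hab
  have hΦa : Φ a ≠ 0 := (map_ne_zero Φ).2 ha
  have h1 := mulVec_single_one_eq hg h0 h6
  have h3 : g.1 *ᵥ Pi.single 3 1 = Pi.single 3 1 := by rw [mulVec_single_three hg h0 h6, hab]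
  have h5 : g.1 *ᵥ Pi.single 5 1 = Pi.single 5 (a / Φ a) := by
    rw [mulVec_single_five_eq hg h0 h6, map_inv₀, inv_div_inv]
  have h2 : g.1 *ᵥ Pi.single 2 1 = Pi.single 2 (a ^ 2 / Φ a) := by
    have h := cross_mulVec hg (Pi.single 0 1) (Pi.single 5 1)
    rw [h0, h5, cross_single_zero_five, cross_single_zero_five, one_mul, Pi.single_neg,
      Pi.single_neg, mulVec_neg, neg_inj] at h
    rw [← h, ← mul_div_assoc, sq]
  have h4 : g.1 *ᵥ Pi.single 4 1 = Pi.single 4 (Φ a / a ^ 2) := by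
    have h := cross_mulVec hg (Pi.single 6 1) (Pi.single 1 1)
    rw [h6, h1, cross_single_six_one, cross_single_six_one, one_mul] at h
    rw [← h, ← div_eq_inv_mul, div_div, sq]
  refine ⟨Units.mk0 (Φ a) hΦa, Units.ext (ext_of_mulVec_single fun i => ?_)⟩
  simp only [torus, GeneralLinearGroup.val_mkOfDetNeZero, hmat_eq_diagonal, diagonal_mulVec_single,
    Units.val_mk0, hΦ.pow_map, mul_one]
  fin_cases i
  exacts [h0, h1, h2, h3, h4, h5, h6]

end TwoPointStabilizer

section Coordinates

variable {F : Type*} [Field F] {t : ℕ} {Φ : F →+* F}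

theorem unipotent_mulVec (t : ℕ) (p : F × F × F) (x : Fin 7 → F) :
    (unipotent t p).1 *ᵥ x = amat t p.1 *ᵥ bmat t p.2.1 *ᵥ cmat t p.2.2 *ᵥ x := by
  rw [mulVec_mulVec, mulVec_mulVec]
  rfl

theorem unipotent_mulVec_single_zero (t : ℕ) (p : F × F × F) (c : F) :
    (unipotent t p).1 *ᵥ Pi.single 0 c = Pi.single 0 c := by
  rw [unipotent_mulVec, amat_mulVec, bmat_mulVec, cmat_mulVec]
  ext i
  fin_cases i <;> simp

section
variable (t : ℕ) (p : F × F × F) (x : Fin 7 → F)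

theorem unipotent_mulVec_apply_six : ((unipotent t p).1 *ᵥ x) 6 = x 6 := by
  simp [unipotent_mulVec, amat_mulVec, bmat_mulVec, cmat_mulVec]

theorem unipotent_mulVec_apply_five : ((unipotent t p).1 *ᵥ x) 5 = x 5 - p.1 ^ t * x 6 := by
  simp [unipotent_mulVec, amat_mulVec, bmat_mulVec, cmat_mulVec]

theorem unipotent_mulVec_apply_four :
    ((unipotent t p).1 *ᵥ x) 4 = x 4 - p.1 * x 5 + (p.1 ^ t * p.1 + p.2.1 ^ t) * x 6 := by
  simp only [unipotent_mulVec, amat_mulVec, bmat_mulVec, cmat_mulVec, cons_val]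
  ring

theorem unipotent_mulVec_apply_three :
    ((unipotent t p).1 *ᵥ x) 3 =
      x 3 + p.1 ^ t * x 4 + p.2.1 ^ t * x 5 + (p.1 ^ t * p.2.1 ^ t - p.2.2 ^ t) * x 6 := by
  simp only [unipotent_mulVec, amat_mulVec, bmat_mulVec, cmat_mulVec, cons_val]
  ring
end

theorem unipotent_mulVec_single_six_inj (hΦ : IsTitsEndomorphism t Φ) {p p' : F × F × F} {c c' : F}
    (hc : c ≠ 0) (h : (unipotent t p).1 *ᵥ Pi.single 6 c = (unipotent t p').1 *ᵥ Pi.single 6 c') :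
    p = p' ∧ c = c' := by
  obtain rfl : c = c' := by simpa [unipotent_mulVec_apply_six, -mulVec_single] using congrFun h 6
  obtain ⟨a, b, e⟩ := p
  obtain ⟨a', b', e'⟩ := p'
  obtain rfl : a = a' := hΦ.pow_left_injective <| by
    simpa [unipotent_mulVec_apply_five, hc, -mulVec_single] using congrFun h 5
  obtain rfl : b = b' := hΦ.pow_left_injective <| by
    simpa [unipotent_mulVec_apply_four, hc, -mulVec_single] using congrFun h 4
  obtain rfl : e = e' := hΦ.pow_left_injective <| by
    simpa [unipotent_mulVec_apply_three, hc, -mulVec_single] using congrFun h 3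
  exact ⟨rfl, rfl⟩

variable [CharP F 3] {x : Fin 7 → F}

theorem unipotent_mem_twistedG2 (hΦ : IsTitsEndomorphism t Φ) (p : F × F × F) :
    unipotent t p ∈ twistedG2 Φ :=
  ReeGroup_le_twistedG2 hΦ (unipotent_mem_ReeGroup t p)

theorem neZero_two (F : Type*) [Field F] [CharP F 3] : NeZero (2 : F) :=
  NeZero.of_not_dvd F (p := 3) (n := 2) (by norm_num)

theorem IsOvoidPoint.exists_eq_unipotent_mulVec (hΦ : IsTitsEndomorphism t Φ)
    (hx : IsOvoidPoint Φ x) (h6 : x 6 ≠ 0) :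
    ∃ p, x = (unipotent t p).1 *ᵥ Pi.single 6 (x 6) := by
  obtain ⟨a, ha⟩ : ∃ a, a ^ t = -x 5 / x 6 := ⟨_, hΦ.pow_map _⟩
  obtain ⟨b, hb⟩ : ∃ b, b ^ t = x 4 / x 6 - a ^ t * a := ⟨_, hΦ.pow_map _⟩
  obtain ⟨c, hc⟩ : ∃ c, c ^ t = a ^ t * b ^ t - x 3 / x 6 := ⟨_, hΦ.pow_map _⟩
  obtain ⟨w, hw⟩ : ∃ w, ((unipotent t (a, b, c))⁻¹).1 *ᵥ x = w := ⟨_, rfl⟩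
  have hpoint : IsOvoidPoint Φ w := hw ▸ hx.mulVec (inv_mem (unipotent_mem_twistedG2 hΦ _))
  obtain rfl := inv_mulVec_eq_iff.1 hw
  simp only [unipotent_mulVec_apply_six, unipotent_mulVec_apply_five, unipotent_mulVec_apply_four,
    unipotent_mulVec_apply_three] at ha hb hc h6 ⊢
  have hw5 : w 5 = 0 := by grind
  have hw4 : w 4 = 0 := by grind
  have hw3 : w 3 = 0 := by grind
  have hneZero : NeZero (2 : F) := neZero_two F
  exact ⟨_, congrArg _ (hpoint.eq_single_six hw3 hw4 hw5 h6)⟩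

end Coordinates

section BruhatDecomposition

variable {F : Type*} [Field F] {t : ℕ} {Φ : F →+* F}

/-- The element `S(a, b, c) h(λ)` of the Borel subgroup. -/
def borelElt (t : ℕ) (p : (F × F × F) × Fˣ) : GL (Fin 7) F :=
  unipotent t p.1 * torus t p.2

/-- The element `S(a, b, c) Υ S(a', b', c') h(λ)` of the big cell. -/
def bigCellElt (t : ℕ) (p : (F × F × F) × (F × F × F) × Fˣ) : GL (Fin 7) F :=
  unipotent t p.1 * upsilon * borelElt t p.2

/-- The parametrization of the Bruhat decomposition by the Borel subgroup and the big cell. -/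
def bruhatElt (t : ℕ) : (F × F × F) × Fˣ ⊕ (F × F × F) × (F × F × F) × Fˣ → GL (Fin 7) F :=
  Sum.elim (borelElt t) (bigCellElt t)

theorem borelElt_mulVec_single_zero (p : (F × F × F) × Fˣ) :
    (borelElt t p).1 *ᵥ Pi.single 0 1 = Pi.single 0 ((p.2 : F) ^ t) := by
  have htorus : (torus t p.2).1 *ᵥ Pi.single 0 1 = Pi.single 0 ((p.2 : F) ^ t) := by
    rw [torus, GeneralLinearGroup.val_mkOfDetNeZero, hmat_eq_diagonal, diagonal_mulVec_single,
      mul_one]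
    rfl
  rw [borelElt, Units.val_mul, ← mulVec_mulVec, htorus, unipotent_mulVec_single_zero]

theorem borelElt_mulVec_single_six (p : (F × F × F) × Fˣ) :
    (borelElt t p).1 *ᵥ Pi.single 6 1 =
      (unipotent t p.1).1 *ᵥ Pi.single 6 ((p.2 : F) ^ t)⁻¹ := by
  have htorus : (torus t p.2).1 *ᵥ Pi.single 6 1 = Pi.single 6 ((p.2 : F) ^ t)⁻¹ := by
    rw [torus, GeneralLinearGroup.val_mkOfDetNeZero, hmat_eq_diagonal, diagonal_mulVec_single,
      mul_one]
    rfl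
  rw [borelElt, Units.val_mul, ← mulVec_mulVec, htorus]

theorem bigCellElt_mulVec_single_zero (p : (F × F × F) × (F × F × F) × Fˣ) :
    (bigCellElt t p).1 *ᵥ Pi.single 0 1 =
      (unipotent t p.1).1 *ᵥ Pi.single 6 (-(p.2.2 : F) ^ t) := by
  simp only [bigCellElt, Units.val_mul, ← mulVec_mulVec, borelElt_mulVec_single_zero]
  exact congrArg _ (ups_mulVec_single 0 _)

theorem borelElt_injective (hΦ : IsTitsEndomorphism t Φ) :
    Function.Injective (borelElt t : (F × F × F) × Fˣ → GL (Fin 7) F) := by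
  rintro ⟨p, l⟩ ⟨p', l'⟩ h
  have h6 := congrArg (fun g : GL (Fin 7) F => g.1 *ᵥ Pi.single 6 1) h
  simp only [borelElt_mulVec_single_six] at h6
  obtain ⟨rfl, hl⟩ := unipotent_mulVec_single_six_inj hΦ (by simp) h6
  rw [Units.ext (hΦ.pow_left_injective (inv_injective hl))]

theorem bigCellElt_injective (hΦ : IsTitsEndomorphism t Φ) :
    Function.Injective (bigCellElt t : _ → GL (Fin 7) F) := by
  rintro ⟨p, q⟩ ⟨p', q'⟩ h
  have h0 := congrArg (fun g : GL (Fin 7) F => g.1 *ᵥ Pi.single 0 1) h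
  simp only [bigCellElt_mulVec_single_zero] at h0
  obtain ⟨rfl, -⟩ := unipotent_mulVec_single_six_inj hΦ (by simp) h0
  have hq : q = q' := borelElt_injective hΦ (mul_left_cancel h)
  rw [hq]

theorem borelElt_ne_bigCellElt (p : (F × F × F) × Fˣ) (p' : (F × F × F) × (F × F × F) × Fˣ) :
    borelElt t p ≠ bigCellElt t p' := by
  intro h
  have h0 := congrArg (fun g : GL (Fin 7) F => (g.1 *ᵥ Pi.single 0 1) 6) h
  simp only [borelElt_mulVec_single_zero, bigCellElt_mulVec_single_zero,
    unipotent_mulVec_apply_six] at h0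
  simp at h0

theorem bruhatElt_injective (hΦ : IsTitsEndomorphism t Φ) :
    Function.Injective (bruhatElt t : _ → GL (Fin 7) F) :=
  (borelElt_injective hΦ).sumElim (bigCellElt_injective hΦ) borelElt_ne_bigCellElt

theorem bruhatElt_mem_ReeGroup (p : (F × F × F) × Fˣ ⊕ (F × F × F) × (F × F × F) × Fˣ) :
    bruhatElt t p ∈ ReeGroup t := by
  have borelElt_mem (p : (F × F × F) × Fˣ) : borelElt t p ∈ ReeGroup t :=
    mul_mem (unipotent_mem_ReeGroup t _) (torus_mem_ReeGroup t _)
  rcases p with p | p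
  · exact borelElt_mem p
  · exact mul_mem (mul_mem (unipotent_mem_ReeGroup t _) (upsilon_mem_ReeGroup t))
      (borelElt_mem p.2)

variable [CharP F 3] {g : GL (Fin 7) F}

theorem exists_borelElt_eq (hΦ : IsTitsEndomorphism t Φ) (hg : g ∈ twistedG2 Φ) {a : F}
    (h0 : g.1 *ᵥ Pi.single 0 1 = Pi.single 0 a) : ∃ p, borelElt t p = g := by
  obtain ⟨p, hp⟩ := ((isOvoidPoint_single_six Φ).mulVec hg).exists_eq_unipotent_mulVec hΦ
    (apply_six_ne_zero hg h0)
  have h0' : ((unipotent t p)⁻¹ * g).1 *ᵥ Pi.single 0 1 = Pi.single 0 a := by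
    rw [Units.val_mul, ← mulVec_mulVec, h0, inv_mulVec_eq_iff, unipotent_mulVec_single_zero]
  have h6' : ((unipotent t p)⁻¹ * g).1 *ᵥ Pi.single 6 1 =
      Pi.single 6 ((g.1 *ᵥ Pi.single 6 1) 6) := by
    rwa [Units.val_mul, ← mulVec_mulVec, inv_mulVec_eq_iff]
  have hneZero : NeZero (2 : F) := neZero_two F
  obtain ⟨l, hl⟩ := exists_eq_torus hΦ
    (mul_mem (inv_mem (unipotent_mem_twistedG2 hΦ p)) hg) h0' h6'
  exact ⟨(p, l), (inv_mul_eq_iff_eq_mul.1 hl).symm⟩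

theorem exists_bruhatElt_eq (hΦ : IsTitsEndomorphism t Φ) (hg : g ∈ twistedG2 Φ) :
    ∃ p, bruhatElt t p = g := by
  have hpoint := (isOvoidPoint_single_zero Φ).mulVec hg
  by_cases h6 : (g.1 *ᵥ Pi.single 0 1) 6 = 0
  · obtain ⟨p, hp⟩ := exists_borelElt_eq hΦ hg (hpoint.eq_single_zero h6)
    exact ⟨.inl p, hp⟩
  · obtain ⟨p, hp⟩ := hpoint.exists_eq_unipotent_mulVec hΦ h6
    have h0 : ((unipotent t p * upsilon)⁻¹ * g).1 *ᵥ Pi.single 0 1 =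
        Pi.single 0 (-(g.1 *ᵥ Pi.single 0 1) 6) := by
      have hΥ := ups_mulVec_single 0 (-(g.1 *ᵥ Pi.single 0 1) 6)
      rw [neg_neg] at hΥ
      rw [Units.val_mul, ← mulVec_mulVec, inv_mulVec_eq_iff, Units.val_mul, ← mulVec_mulVec]
      exact hp.trans (congrArg _ hΥ.symm)
    obtain ⟨q, hq⟩ := exists_borelElt_eq hΦ (mul_mem (inv_mem (mul_mem
      (unipotent_mem_twistedG2 hΦ p) (upsilon_mem_twistedG2 Φ))) hg) h0
    exact ⟨.inr (p, q), eq_inv_mul_iff_mul_eq.1 hq⟩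

theorem range_bruhatElt (hΦ : IsTitsEndomorphism t Φ) :
    Set.range (bruhatElt t) = ((ReeGroup t : Subgroup (GL (Fin 7) F)) : Set (GL (Fin 7) F)) :=
  Set.Subset.antisymm (Set.range_subset_iff.2 bruhatElt_mem_ReeGroup)
    fun _ hg => exists_bruhatElt_eq hΦ (ReeGroup_le_twistedG2 hΦ hg)

theorem card_ReeGroup [Finite F] (hΦ : IsTitsEndomorphism t Φ) :
    Nat.card (ReeGroup t : Subgroup (GL (Fin 7) F)) =
      Nat.card F ^ 3 * (Nat.card F ^ 3 + 1) * (Nat.card F - 1) := by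
  have hcard : Nat.card ((ReeGroup t : Subgroup (GL (Fin 7) F)) : Set (GL (Fin 7) F)) = _ :=
    range_bruhatElt hΦ ▸ Nat.card_range_of_injective (bruhatElt_injective hΦ)
  rw [← SetLike.coe_sort_coe, hcard]
  simp only [Nat.card_sum, Nat.card_prod, Nat.card_units]
  ring

end BruhatDecomposition

theorem gcd_cube_add_one_sub_one {q : ℕ} (hq : Odd q) : Nat.gcd (q ^ 3 + 1) (q - 1) = 2 := by
  obtain ⟨k, rfl⟩ := hq
  rw [Nat.add_sub_cancel, show (2 * k + 1) ^ 3 + 1 = 2 + 2 * k * (4 * k ^ 2 + 6 * k + 3) by ring,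
    Nat.gcd_add_mul_left_left, Nat.gcd_mul_right_right]

end ReePaper

/-- The Ree group `Ree(q)` has order `q^3 (q^3 + 1)(q - 1)`, and `gcd(q^3 + 1, q - 1) = 2`. -/
theorem ree_order (m : ℕ) (hm : 0 < m) (F : Type*) [Field F] [Fintype F]
    (hF : Fintype.card F = 3 ^ (2 * m + 1)) :
    Nat.card ↥(ReeGroup (F := F) (3 ^ m)) =
      (3 ^ (2 * m + 1)) ^ 3 * ((3 ^ (2 * m + 1)) ^ 3 + 1) * (3 ^ (2 * m + 1) - 1) ∧
    Nat.gcd ((3 ^ (2 * m + 1)) ^ 3 + 1) (3 ^ (2 * m + 1) - 1) = 2 := by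
  have : CharP F 3 := charP_of_card_eq_prime_pow hF
  refine ⟨?_, gcd_cube_add_one_sub_one (Odd.pow (by decide))⟩
  rw [card_ReeGroup (isTitsEndomorphism_iterateFrobenius hF), Nat.card_eq_fintype_card, hF]
end
end

section
/- The centre of U(q) equals {S(0,0,c) : c ∈ F_q}. -/
open Matrix

noncomputable section

open ReePaper

/-!
Treating `x ↦ x ^ t` as an abstract endomorphism `θ` with `θ (θ x) ^ 3 = x`, the matrices
`S(a, b, c)` multiply in characteristic 3 by
`S(a, b, c) S(x, y, z) = S(a + x, b + y - a θ(x)³, c + z - x b + a x θ(x)³ - a² θ(x)³)`,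
so they already form a group, which is `U(q)`. Comparing third coordinates, an element commuting
with `β(1)` has `a = 0`, and then one commuting with `α(1)` has `b = 0`; conversely every
`S(0, 0, c)` is central.
-/

namespace ReePaper

section CommRing

variable {R : Type*} [CommRing R]

/-- The matrix `S(a, b, c)` multiplied out, with `A`, `B`, `C` standing for the `t`-th powers of
`a`, `b`, `c`. Keeping them independent makes the multiplication law a polynomial identity. -/
def unipotentMat (a A b B c C : R) : Matrix (Fin 7) (Fin 7) R :=
  !![1, A, -B, A * B - C, -A * C - b - a * A ^ 3, -c - B * C - A * B ^ 2 - a ^ 2 * A ^ 3,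
      -C ^ 2 + A * c - A * B * C - b * B - a * A ^ 3 * B + a ^ 2 * A ^ 4;
     0, 1, a, B + a * A, -C - a * A ^ 2, a * C - B ^ 2 + a * A * B,
      c - B * C - a * A * C + a * b - a * A ^ 2 * B - a ^ 2 * A ^ 3;
     0, 0, 1, A, -A ^ 2, C + A * B, -A * C + b - A ^ 2 * B + a * A ^ 3;
     0, 0, 0, 1, A, B, A * B - C;
     0, 0, 0, 0, 1, -a, B + a * A;
     0, 0, 0, 0, 0, 1, -A;
     0, 0, 0, 0, 0, 0, 1]

theorem unipotentMat_zero : unipotentMat (0 : R) 0 0 0 0 0 = 1 := by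
  ext i j
  fin_cases i <;> fin_cases j <;> simp [unipotentMat]

theorem unipotentMat_mul [CharP R 3] (a A b B c C x X y Y z Z : R) :
    unipotentMat a A b B c C * unipotentMat x X y Y z Z =
      unipotentMat (a + x) (A + X) (b + y - a * X ^ 3) (B + Y - A * x)
        (c + z - x * b + a * x * X ^ 3 - a ^ 2 * X ^ 3)
        (C + Z - X * B + A * X * x - A ^ 2 * x) := by
  ext i j
  fin_cases i <;> fin_cases j <;>
    simp [unipotentMat, Matrix.mul_apply, Fin.sum_univ_seven] <;> grind

theorem unipotentMat_inj {a A b B c C x X y Y z Z : R} :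
    unipotentMat a A b B c C = unipotentMat x X y Y z Z ↔
      a = x ∧ A = X ∧ b = y ∧ B = Y ∧ c = z ∧ C = Z := by
  refine ⟨fun h ↦ ?_, by rintro ⟨rfl, rfl, rfl, rfl, rfl, rfl⟩; rfl⟩
  have entry (i j : Fin 7) := congr_fun₂ h i j
  have hA : A = X := entry 0 1
  have ha : a = x := entry 1 2
  have hB : B = Y := neg_injective (entry 0 2)
  subst hA ha hB
  have hC : C = Z := sub_right_injective (entry 0 3)
  subst hC
  have hb : b = y := sub_right_injective (sub_left_injective (entry 0 4))
  have hc : c = z := by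
    have h05 : -c - B * C - A * B ^ 2 - a ^ 2 * A ^ 3 = -z - B * C - A * B ^ 2 - a ^ 2 * A ^ 3 :=
      entry 0 5
    linear_combination -h05
  exact ⟨rfl, rfl, hb, rfl, hc, rfl⟩

/-- In characteristic 3, an endomorphism whose square is inverse to the Frobenius map. On a field
with `3 ^ (2 * m + 1)` elements, `x ↦ x ^ 3 ^ m` is one. -/
def IsTitsEndomorphism_s3 (θ : R →+* R) : Prop :=
  ∀ x, θ (θ x) ^ 3 = x

/-- The matrix `S(a, b, c)`, with an arbitrary endomorphism `θ` in place of `x ↦ x ^ t`. -/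
def reeMat (θ : R →+* R) (a b c : R) : Matrix (Fin 7) (Fin 7) R :=
  unipotentMat a (θ a) b (θ b) c (θ c)

theorem reeMat_zero (θ : R →+* R) : reeMat θ 0 0 0 = 1 := by
  simp only [reeMat, map_zero, unipotentMat_zero]

variable [CharP R 3] {θ : R →+* R}

theorem reeMat_mul (hθ : IsTitsEndomorphism_s3 θ) (a b c x y z : R) :
    reeMat θ a b c * reeMat θ x y z =
      reeMat θ (a + x) (b + y - a * θ x ^ 3)
        (c + z - x * b + a * x * θ x ^ 3 - a ^ 2 * θ x ^ 3) := by
  simp only [reeMat, unipotentMat_mul, map_add, map_sub, map_mul, map_pow, hθ x]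

theorem reeMat_mul_inv (hθ : IsTitsEndomorphism_s3 θ) (a b c : R) :
    reeMat θ a b c * reeMat θ (-a) (-b - a * θ a ^ 3) (-c - a * b + a ^ 2 * θ a ^ 3) = 1 := by
  rw [reeMat_mul hθ, ← reeMat_zero θ, map_neg]
  congr 1 <;> grind

theorem isUnit_reeMat (hθ : IsTitsEndomorphism_s3 θ) (a b c : R) : IsUnit (reeMat θ a b c) :=
  .of_mul_eq_one _ (reeMat_mul_inv hθ a b c)

theorem commute_reeMat_zero_zero (hθ : IsTitsEndomorphism_s3 θ) (a b c z : R) :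
    Commute (reeMat θ 0 0 z) (reeMat θ a b c) := by
  rw [commute_iff_eq, reeMat_mul hθ, reeMat_mul hθ, map_zero]
  congr 1 <;> ring

theorem eq_zero_of_commute_reeMat_zero_one (hθ : IsTitsEndomorphism_s3 θ) {a b c : R}
    (h : Commute (reeMat θ a b c) (reeMat θ 0 1 0)) : a = 0 := by
  rw [commute_iff_eq, reeMat_mul hθ, reeMat_mul hθ, reeMat, reeMat, unipotentMat_inj] at h
  simpa using h.2.2.2.2.1.symm

theorem eq_zero_of_commute_reeMat_one_zero (hθ : IsTitsEndomorphism_s3 θ) {b c : R}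
    (h : Commute (reeMat θ 0 b c) (reeMat θ 1 0 0)) : b = 0 := by
  rw [commute_iff_eq, reeMat_mul hθ, reeMat_mul hθ, reeMat, reeMat, unipotentMat_inj] at h
  simpa using h.2.2.2.2.1

/-- The group of all `S(a, b, c)`, playing the role of `U(q)` over a ring with a Tits
endomorphism. -/
def reeUnipotentSubgroup (hθ : IsTitsEndomorphism_s3 θ) : Subgroup (GL (Fin 7) R) where
  carrier := {g | ∃ a b c : R, (g : Matrix (Fin 7) (Fin 7) R) = reeMat θ a b c}
  one_mem' := ⟨0, 0, 0, (reeMat_zero θ).symm⟩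
  mul_mem' := by
    rintro g h ⟨a, b, c, hg⟩ ⟨x, y, z, hh⟩
    exact ⟨_, _, _, by rw [Units.val_mul, hg, hh, reeMat_mul hθ]⟩
  inv_mem' := by
    rintro g ⟨a, b, c, hg⟩
    exact ⟨_, _, _, Units.inv_eq_of_mul_eq_one_right (hg ▸ reeMat_mul_inv hθ a b c)⟩

theorem mem_reeUnipotentSubgroup_and_commute_iff (hθ : IsTitsEndomorphism_s3 θ) {g : GL (Fin 7) R} :
    (g ∈ reeUnipotentSubgroup hθ ∧ ∀ u ∈ reeUnipotentSubgroup hθ, g * u = u * g) ↔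
      ∃ z : R, (g : Matrix (Fin 7) (Fin 7) R) = reeMat θ 0 0 z := by
  constructor
  · rintro ⟨⟨a, b, c, hg⟩, hcomm⟩
    have hcomm_reeMat (x y z : R) :
        Commute (g : Matrix (Fin 7) (Fin 7) R) (reeMat θ x y z) := by
      obtain ⟨u, hu⟩ := isUnit_reeMat hθ x y z
      rw [← hu]
      exact congr_arg Units.val (hcomm u ⟨x, y, z, hu⟩)
    obtain rfl : a = 0 := eq_zero_of_commute_reeMat_zero_one hθ (hg ▸ hcomm_reeMat 0 1 0)
    obtain rfl : b = 0 := eq_zero_of_commute_reeMat_one_zero hθ (hg ▸ hcomm_reeMat 1 0 0)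
    exact ⟨c, hg⟩
  · rintro ⟨z, hg⟩
    refine ⟨⟨0, 0, z, hg⟩, ?_⟩
    rintro u ⟨a, b, c, hu⟩
    apply Units.ext
    rw [Units.val_mul, Units.val_mul, hg, hu, commute_reeMat_zero_zero hθ a b c z]

end CommRing

section Field

variable {F : Type*} [Field F] {t : ℕ} {θ : F →+* F}

theorem amat_eq_reeMat (hθt : ∀ x, θ x = x ^ t) (x : F) : amat t x = reeMat θ x 0 0 := by
  rw [reeMat, map_zero, hθt]
  ext i j
  fin_cases i <;> fin_cases j <;> simp [amat, unipotentMat] <;> ring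

theorem bmat_eq_reeMat (hθt : ∀ x, θ x = x ^ t) (x : F) : bmat t x = reeMat θ 0 x 0 := by
  rw [reeMat, map_zero, hθt]
  ext i j
  fin_cases i <;> fin_cases j <;> simp [bmat, unipotentMat] <;> ring

theorem cmat_eq_reeMat (hθt : ∀ x, θ x = x ^ t) (x : F) : cmat t x = reeMat θ 0 0 x := by
  rw [reeMat, map_zero, hθt]
  ext i j
  fin_cases i <;> fin_cases j <;> simp [cmat, unipotentMat]
  ring

variable [CharP F 3]

theorem Smat_eq_reeMat (hθ : IsTitsEndomorphism_s3 θ) (hθt : ∀ x, θ x = x ^ t) (a b c : F) :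
    Smat t a b c = reeMat θ a b c := by
  rw [Smat, amat_eq_reeMat hθt, bmat_eq_reeMat hθt, cmat_eq_reeMat hθt, reeMat_mul hθ,
    reeMat_mul hθ, map_zero]
  congr 1 <;> ring

theorem Usub_eq_reeUnipotentSubgroup (hθ : IsTitsEndomorphism_s3 θ) (hθt : ∀ x, θ x = x ^ t) :
    Usub t = reeUnipotentSubgroup hθ := by
  refine le_antisymm ((Subgroup.closure_le _).2 ?_) ?_
  · rintro g (⟨x, hg⟩ | ⟨x, hg⟩ | ⟨x, hg⟩)
    · exact ⟨x, 0, 0, hg.trans (amat_eq_reeMat hθt x)⟩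
    · exact ⟨0, x, 0, hg.trans (bmat_eq_reeMat hθt x)⟩
    · exact ⟨0, 0, x, hg.trans (cmat_eq_reeMat hθt x)⟩
  · rintro g ⟨a, b, c, hg⟩
    obtain ⟨α, hα⟩ := amat_eq_reeMat hθt a ▸ isUnit_reeMat hθ a 0 0
    obtain ⟨β, hβ⟩ := bmat_eq_reeMat hθt b ▸ isUnit_reeMat hθ 0 b 0
    obtain ⟨γ, hγ⟩ := cmat_eq_reeMat hθt c ▸ isUnit_reeMat hθ 0 0 c
    have hg_factor : g = α * β * γ := Units.ext <| by
      rw [hg, ← Smat_eq_reeMat hθ hθt, Smat, Units.val_mul, Units.val_mul, hα, hβ, hγ]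
    rw [hg_factor]
    exact mul_mem (mul_mem (Subgroup.subset_closure (.inl ⟨a, hα⟩))
      (Subgroup.subset_closure (.inr (.inl ⟨b, hβ⟩))))
      (Subgroup.subset_closure (.inr (.inr ⟨c, hγ⟩)))

theorem isTitsEndomorphism_iterateFrobenius_s3 [Fintype F] {m : ℕ}
    (hF : Fintype.card F = 3 ^ (2 * m + 1)) :
    IsTitsEndomorphism_s3 (iterateFrobenius F 3 m) := fun x ↦
  calc (((x ^ 3 ^ m) ^ 3 ^ m) ^ 3 : F)
    _ = x ^ Fintype.card F := by rw [hF, ← pow_mul, ← pow_mul]; ring_nf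
    _ = x := FiniteField.pow_card x

theorem usub_center_general (hθ : IsTitsEndomorphism_s3 θ) (hθt : ∀ x, θ x = x ^ t) :
    {g : GL (Fin 7) F | g ∈ Usub t ∧ ∀ u ∈ Usub t, g * u = u * g} =
      {g : GL (Fin 7) F | ∃ c : F, (g : Matrix (Fin 7) (Fin 7) F) = Smat t 0 0 c} := by
  simp only [Usub_eq_reeUnipotentSubgroup hθ hθt, Smat_eq_reeMat hθ hθt,
    mem_reeUnipotentSubgroup_and_commute_iff hθ]

end Field

end ReePaper

/-- The centre of `U(q)` equals `{S(0,0,c) : c ∈ F_q}`. -/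
theorem usub_center (m : ℕ) (hm : 0 < m) (F : Type*) [Field F] [Fintype F]
    (hF : Fintype.card F = 3 ^ (2 * m + 1)) :
    {g : GL (Fin 7) F | g ∈ Usub (F := F) (3 ^ m) ∧
        ∀ u ∈ Usub (F := F) (3 ^ m), g * u = u * g} =
      {g : GL (Fin 7) F | ∃ c : F, (g : Matrix (Fin 7) (Fin 7) F) = Smat (3 ^ m) 0 0 c} := by
  have : CharP F 3 := charP_of_card_eq_prime_pow hF
  exact usub_center_general (isTitsEndomorphism_iterateFrobenius_s3 hF) fun x ↦ iterateFrobenius_def ..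
end
end

section
/- The derived subgroup of U(q) equals {S(0,b,c) : b, c ∈ F_q}, and every nontrivial element of this subgroup has order 3. -/
open Matrix

noncomputable section

open ReePaper

/-!
Write `θ` for `x ↦ x ^ t`, a field automorphism with `θ (θ x) ^ 3 = x`. The Chevalley relations
between `α`, `β` and `γ` show that the matrices `S(a, b, c)` form a group, so that `U(q)` is a
homomorphic image of a group on triples `(a, b, c)`. There `a` is a homomorphism to an abelian
group, so the derived subgroup lies in its kernel, which has exponent 3. Conversely, the commutators
of `(1, 0, 0)` and `(0, c, 0)` give all `(0, 0, c)`, and for fixed `d` with `θ d ^ 3 ≠ d` those of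
`(l * d, 0, 0)` and `(l, 0, 0)` have second coordinate `l * θ l ^ 3 * (θ d ^ 3 - d)`. Here
`l * θ l ^ 3` takes every square as a value (at `l = θ s ^ 3 / s` it is `s ^ 2`), and in
characteristic 3 every element is a difference of squares: `w = (w + 1) ^ 2 - (w - 1) ^ 2`.
-/

namespace ReePaper

section ChevalleyRelations

variable {R : Type*} [CommRing R]

/-- The matrix `α(x)`, with `X` in place of `x ^ t`. Keeping the two independent makes the
Chevalley relations polynomial identities. -/
def alphaMatrix (x X : R) : Matrix (Fin 7) (Fin 7) R :=
  !![1, X, 0, 0, -(X ^ 3 * x), -(X ^ 3 * x ^ 2), X ^ 4 * x ^ 2;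
     0, 1, x, X * x, -(X ^ 2 * x), 0, -(X ^ 3 * x ^ 2);
     0, 0, 1, X, -X ^ 2, 0, X ^ 3 * x;
     0, 0, 0, 1, X, 0, 0;
     0, 0, 0, 0, 1, -x, X * x;
     0, 0, 0, 0, 0, 1, -X;
     0, 0, 0, 0, 0, 0, 1]

/-- The matrix `β(x)`, with `X` in place of `x ^ t`. -/
def betaMatrix (x X : R) : Matrix (Fin 7) (Fin 7) R :=
  !![1, 0, -X, 0, -x, 0, -(X * x);
     0, 1, 0, X, 0, -X ^ 2, 0;
     0, 0, 1, 0, 0, 0, x;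
     0, 0, 0, 1, 0, X, 0;
     0, 0, 0, 0, 1, 0, X;
     0, 0, 0, 0, 0, 1, 0;
     0, 0, 0, 0, 0, 0, 1]

/-- The matrix `γ(x)`, with `X` in place of `x ^ t`. -/
def gammaMatrix (x X : R) : Matrix (Fin 7) (Fin 7) R :=
  !![1, 0, 0, -X, 0, -x, -X ^ 2;
     0, 1, 0, 0, -X, 0, x;
     0, 0, 1, 0, 0, X, 0;
     0, 0, 0, 1, 0, 0, -X;
     0, 0, 0, 0, 1, 0, 0;
     0, 0, 0, 0, 0, 1, 0;
     0, 0, 0, 0, 0, 0, 1]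

lemma alphaMatrix_zero : alphaMatrix (0 : R) 0 = 1 := by
  simp [alphaMatrix, ← Matrix.ext_iff, Fin.forall_fin_succ]

lemma betaMatrix_zero : betaMatrix (0 : R) 0 = 1 := by
  simp [betaMatrix, ← Matrix.ext_iff, Fin.forall_fin_succ]

lemma gammaMatrix_zero : gammaMatrix (0 : R) 0 = 1 := by
  simp [gammaMatrix, ← Matrix.ext_iff, Fin.forall_fin_succ]

lemma commute_gammaMatrix_alphaMatrix (c C a A : R) :
    Commute (gammaMatrix c C) (alphaMatrix a A) := by
  simp only [commute_iff_eq, gammaMatrix, alphaMatrix, cons_mul, empty_mul, vecMul_cons,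
    empty_vecMul, smul_cons, smul_empty, smul_eq_mul, add_zero, add_cons, empty_add_empty,
    head_cons, tail_cons, Equiv.symm_apply_apply, EmbeddingLike.apply_eq_iff_eq, vecCons_inj]
  and_intros <;> grind

lemma commute_gammaMatrix_betaMatrix (c C b B : R) :
    Commute (gammaMatrix c C) (betaMatrix b B) := by
  simp only [commute_iff_eq, gammaMatrix, betaMatrix, cons_mul, empty_mul, vecMul_cons,
    empty_vecMul, smul_cons, smul_empty, smul_eq_mul, add_zero, add_cons, empty_add_empty,
    head_cons, tail_cons, Equiv.symm_apply_apply, EmbeddingLike.apply_eq_iff_eq, vecCons_inj]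
  and_intros <;> grind

variable [CharP R 3]

lemma alphaMatrix_mul_alphaMatrix (a A a' A' : R) :
    alphaMatrix a A * alphaMatrix a' A' =
      alphaMatrix (a + a') (A + A') * betaMatrix (-(a * A' ^ 3)) (-(A * a')) *
        gammaMatrix (a * A' ^ 3 * a' - a ^ 2 * A' ^ 3) (A * a' * A' - A ^ 2 * a') := by
  simp only [alphaMatrix, betaMatrix, gammaMatrix, cons_mul, empty_mul, vecMul_cons, empty_vecMul,
    smul_cons, smul_empty, smul_eq_mul, add_zero, add_cons, empty_add_empty, head_cons, tail_cons,
    Equiv.symm_apply_apply, EmbeddingLike.apply_eq_iff_eq, vecCons_inj]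
  and_intros <;> grind

lemma betaMatrix_mul_alphaMatrix (b B a A : R) :
    betaMatrix b B * alphaMatrix a A =
      alphaMatrix a A * betaMatrix b B * gammaMatrix (-(a * b)) (-(A * B)) := by
  simp only [alphaMatrix, betaMatrix, gammaMatrix, cons_mul, empty_mul, vecMul_cons, empty_vecMul,
    smul_cons, smul_empty, smul_eq_mul, add_zero, add_cons, empty_add_empty, head_cons, tail_cons,
    Equiv.symm_apply_apply, EmbeddingLike.apply_eq_iff_eq, vecCons_inj]
  and_intros <;> grind

lemma betaMatrix_mul_betaMatrix (b B b' B' : R) :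
    betaMatrix b B * betaMatrix b' B' = betaMatrix (b + b') (B + B') := by
  simp only [betaMatrix, cons_mul, empty_mul, vecMul_cons, empty_vecMul,
    smul_cons, smul_empty, smul_eq_mul, add_zero, add_cons, empty_add_empty, head_cons, tail_cons,
    Equiv.symm_apply_apply, EmbeddingLike.apply_eq_iff_eq, vecCons_inj]
  and_intros <;> grind

lemma gammaMatrix_mul_gammaMatrix (c C c' C' : R) :
    gammaMatrix c C * gammaMatrix c' C' = gammaMatrix (c + c') (C + C') := by
  simp only [gammaMatrix, cons_mul, empty_mul, vecMul_cons, empty_vecMul,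
    smul_cons, smul_empty, smul_eq_mul, add_zero, add_cons, empty_add_empty, head_cons, tail_cons,
    Equiv.symm_apply_apply, EmbeddingLike.apply_eq_iff_eq, vecCons_inj]
  and_intros <;> grind

lemma alphaMatrix_mul_betaMatrix_mul_gammaMatrix_mul (a A b B c C a' A' b' B' c' C' : R) :
    alphaMatrix a A * betaMatrix b B * gammaMatrix c C *
        (alphaMatrix a' A' * betaMatrix b' B' * gammaMatrix c' C') =
      alphaMatrix (a + a') (A + A') * betaMatrix (b + b' - a * A' ^ 3) (B + B' - A * a') *
        gammaMatrix (c + c' - a' * b + a * A' ^ 3 * a' - a ^ 2 * A' ^ 3)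
          (C + C' - A' * B + A * a' * A' - A ^ 2 * a') := by
  have hγα (c C a A : R) := (commute_gammaMatrix_alphaMatrix c C a A).left_comm
  have hγβ (c C b B : R) := (commute_gammaMatrix_betaMatrix c C b B).left_comm
  calc
    _ = alphaMatrix a A * (betaMatrix b B * alphaMatrix a' A') * betaMatrix b' B' *
          (gammaMatrix c C * gammaMatrix c' C') := by
      simp only [Matrix.mul_assoc, hγα, hγβ]
    _ = alphaMatrix a A * alphaMatrix a' A' * betaMatrix b B *
          (gammaMatrix (-(a' * b)) (-(A' * B)) * betaMatrix b' B') *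
          (gammaMatrix c C * gammaMatrix c' C') := by
      simp only [betaMatrix_mul_alphaMatrix, Matrix.mul_assoc]
    _ = alphaMatrix (a + a') (A + A') *
          (betaMatrix (-(a * A' ^ 3)) (-(A * a')) * (betaMatrix b B * betaMatrix b' B')) *
          (gammaMatrix (a * A' ^ 3 * a' - a ^ 2 * A' ^ 3) (A * a' * A' - A ^ 2 * a') *
            (gammaMatrix (-(a' * b)) (-(A' * B)) * (gammaMatrix c C * gammaMatrix c' C'))) := by
      simp only [alphaMatrix_mul_alphaMatrix, Matrix.mul_assoc, hγβ]
    _ = _ := by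
      simp only [betaMatrix_mul_betaMatrix, gammaMatrix_mul_gammaMatrix]
      congr 1
      · congr 2 <;> ring
      · congr 1 <;> ring

end ChevalleyRelations

section Coordinates

variable {R : Type*} [CommRing R]

/-- The group of triples `(a, b, c)` that multiply as the matrices `S(a, b, c)`, where `θ` plays the
role of `x ↦ x ^ t`. -/
structure ReeUnipotent (θ : R →+* R) where
  a : R
  b : R
  c : R

namespace ReeUnipotent

variable {θ : R →+* R}

instance : Mul (ReeUnipotent θ) where
  mul u v := ⟨u.a + v.a, u.b + v.b - u.a * θ v.a ^ 3,
    u.c + v.c - v.a * u.b + u.a * θ v.a ^ 3 * v.a - u.a ^ 2 * θ v.a ^ 3⟩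

instance : One (ReeUnipotent θ) where
  one := ⟨0, 0, 0⟩

instance : Inv (ReeUnipotent θ) where
  inv u := ⟨-u.a, -u.b - u.a * θ u.a ^ 3, -u.c - u.a * u.b + u.a ^ 2 * θ u.a ^ 3⟩

lemma mk_mul_mk (a b c a' b' c' : R) :
    (⟨a, b, c⟩ * ⟨a', b', c'⟩ : ReeUnipotent θ) =
      ⟨a + a', b + b' - a * θ a' ^ 3, c + c' - a' * b + a * θ a' ^ 3 * a' - a ^ 2 * θ a' ^ 3⟩ :=
  rfl

lemma one_def : (1 : ReeUnipotent θ) = ⟨0, 0, 0⟩ :=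
  rfl

lemma inv_mk (a b c : R) :
    (⟨a, b, c⟩⁻¹ : ReeUnipotent θ) =
      ⟨-a, -b - a * θ a ^ 3, -c - a * b + a ^ 2 * θ a ^ 3⟩ :=
  rfl

lemma mk_zero_mul_mk_zero (b c b' c' : R) :
    (⟨0, b, c⟩ * ⟨0, b', c'⟩ : ReeUnipotent θ) = ⟨0, b + b', c + c'⟩ := by
  simp [mk_mul_mk]

lemma mk_zero_inv (b c : R) : (⟨0, b, c⟩⁻¹ : ReeUnipotent θ) = ⟨0, -b, -c⟩ := by
  simp [inv_mk]

lemma mk_eq_mul (a b c : R) :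
    (⟨a, b, c⟩ : ReeUnipotent θ) = ⟨a, 0, 0⟩ * ⟨0, b, 0⟩ * ⟨0, 0, c⟩ := by
  simp [mk_mul_mk]

variable [CharP R 3]

instance : Group (ReeUnipotent θ) :=
  Group.ofLeftAxioms
    (by
      rintro ⟨a, b, c⟩ ⟨a', b', c'⟩ ⟨a'', b'', c''⟩
      simp only [mk_mul_mk, map_add, mk.injEq]
      grind)
    (by
      rintro ⟨a, b, c⟩
      simp [one_def, mk_mul_mk])
    (by
      rintro ⟨a, b, c⟩
      simp only [inv_mk, mk_mul_mk, one_def, mk.injEq]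
      grind)

lemma mk_zero_pow_three (b c : R) : (⟨0, b, c⟩ : ReeUnipotent θ) ^ 3 = 1 := by
  simp only [pow_three, mk_zero_mul_mk_zero, one_def, mk.injEq]
  grind

open scoped commutatorElement in
lemma commutatorElement_mk_mk (a b c a' b' c' : R) :
    ⁅(⟨a, b, c⟩ : ReeUnipotent θ), (⟨a', b', c'⟩ : ReeUnipotent θ)⁆ =
      (⟨0, a' * θ a ^ 3 - a * θ a' ^ 3,
        a * b' - a' * b + a ^ 2 * θ a' ^ 3 - a' ^ 2 * θ a ^ 3⟩ : ReeUnipotent θ) := by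
  rw [commutatorElement_def, mul_assoc, ← _root_.mul_inv_rev, mul_inv_eq_iff_eq_mul]
  simp only [mk_mul_mk, mk.injEq]
  grind

variable (θ) in
/-- The first coordinate, as a homomorphism to an abelian group. -/
def aHom : ReeUnipotent θ →* Multiplicative R where
  toFun u := .ofAdd u.a
  map_one' := rfl
  map_mul' _ _ := rfl

lemma mk_zero_zero_mem_commutator (c : R) : (⟨0, 0, c⟩ : ReeUnipotent θ) ∈ commutator _ := by
  have h := Subgroup.commutator_mem_commutator
    (Subgroup.mem_top (⟨1, 0, 0⟩ : ReeUnipotent θ)) (Subgroup.mem_top ⟨0, c, 0⟩)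
  simpa [commutatorElement_mk_mk, commutator_def] using h

end ReeUnipotent

end Coordinates

section Derived

lemma exists_map_pow_three_ne {R : Type*} [Semiring R] {θ : R →+* R}
    (hθ : ∀ x, θ (θ x) ^ 3 = x) (hne : θ ≠ RingHom.id R) :
    ∃ d, θ d ^ 3 ≠ d := by
  by_contra! hfix
  exact hne (RingHom.ext fun x => (hfix (θ x)).symm.trans (hθ x))

variable {K : Type*} [Field K] {θ : K →+* K}

lemma exists_mul_map_pow_three_eq_sq (hθ : ∀ x, θ (θ x) ^ 3 = x) (s : K) :
    ∃ l, l * θ l ^ 3 = s ^ 2 := by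
  rcases eq_or_ne s 0 with rfl | hs
  · exact ⟨0, by simp⟩
  · have hθs : θ s ≠ 0 := by simpa using hs
    refine ⟨θ s ^ 3 / s, ?_⟩
    rw [map_div₀, map_pow, hθ]
    field_simp

namespace ReeUnipotent

variable [CharP K 3]

lemma exists_mk_zero_sq_mul_mem_commutator (hθ : ∀ x, θ (θ x) ^ 3 = x) (s d : K) :
    ∃ y, (⟨0, s ^ 2 * (θ d ^ 3 - d), y⟩ : ReeUnipotent θ) ∈ commutator _ := by
  obtain ⟨l, hl⟩ := exists_mul_map_pow_three_eq_sq hθ s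
  have h := Subgroup.commutator_mem_commutator
    (Subgroup.mem_top (⟨l * d, 0, 0⟩ : ReeUnipotent θ)) (Subgroup.mem_top ⟨l, 0, 0⟩)
  have hb : l * θ (l * d) ^ 3 - l * d * θ l ^ 3 = s ^ 2 * (θ d ^ 3 - d) := by
    rw [← hl, map_mul]
    ring
  rw [commutatorElement_mk_mk, hb] at h
  exact ⟨_, h⟩

lemma exists_mk_zero_mem_commutator (hθ : ∀ x, θ (θ x) ^ 3 = x) (hne : θ ≠ RingHom.id K) (b : K) :
    ∃ y, (⟨0, b, y⟩ : ReeUnipotent θ) ∈ commutator _ := by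
  obtain ⟨d, hd⟩ := exists_map_pow_three_ne hθ hne
  obtain ⟨w, rfl⟩ : ∃ w, w * (θ d ^ 3 - d) = b := ⟨_, div_mul_cancel₀ b (sub_ne_zero.mpr hd)⟩
  obtain ⟨y, hy⟩ := exists_mk_zero_sq_mul_mem_commutator hθ (w + 1) d
  obtain ⟨z, hz⟩ := exists_mk_zero_sq_mul_mem_commutator hθ (w - 1) d
  have h := mul_mem hy (inv_mem hz)
  rw [mk_zero_inv, mk_zero_mul_mk_zero] at h
  have hw : (w + 1) ^ 2 * (θ d ^ 3 - d) + -((w - 1) ^ 2 * (θ d ^ 3 - d)) = w * (θ d ^ 3 - d) := by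
    have h3 : (3 : K) = 0 := CharP.cast_eq_zero K 3
    linear_combination w * (θ d ^ 3 - d) * h3
  exact ⟨_, hw ▸ h⟩

theorem commutator_eq_ker_aHom (hθ : ∀ x, θ (θ x) ^ 3 = x) (hne : θ ≠ RingHom.id K) :
    commutator (ReeUnipotent θ) = (aHom θ).ker := by
  refine le_antisymm (Abelianization.commutator_subset_ker _) ?_
  rintro ⟨a, b, c⟩ (rfl : a = 0)
  obtain ⟨y, hy⟩ := exists_mk_zero_mem_commutator hθ hne b
  have h := mul_mem hy (mk_zero_zero_mem_commutator (c - y))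
  rwa [mk_zero_mul_mk_zero, add_zero, add_sub_cancel] at h

end ReeUnipotent

end Derived

section Representation

variable {R : Type*} [CommRing R]

/-- The matrix `S(a, b, c)`, with `θ` in place of `x ↦ x ^ t`. -/
def sMatrix (θ : R →+* R) (a b c : R) : Matrix (Fin 7) (Fin 7) R :=
  alphaMatrix a (θ a) * betaMatrix b (θ b) * gammaMatrix c (θ c)

/-- The group `U = ⟨α(x), β(x), γ(x)⟩`, with `θ` in place of `x ↦ x ^ t`. -/
def unipotentGroup (θ : R →+* R) : Subgroup (GL (Fin 7) R) :=
  Subgroup.closure {g |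
    (∃ x, (g : Matrix (Fin 7) (Fin 7) R) = alphaMatrix x (θ x)) ∨
    (∃ x, (g : Matrix (Fin 7) (Fin 7) R) = betaMatrix x (θ x)) ∨
    (∃ x, (g : Matrix (Fin 7) (Fin 7) R) = gammaMatrix x (θ x))}

variable {θ : R →+* R}

lemma sMatrix_left (x : R) : sMatrix θ x 0 0 = alphaMatrix x (θ x) := by
  simp [sMatrix, betaMatrix_zero, gammaMatrix_zero]

lemma sMatrix_middle (x : R) : sMatrix θ 0 x 0 = betaMatrix x (θ x) := by
  simp [sMatrix, alphaMatrix_zero, gammaMatrix_zero]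

lemma sMatrix_right (x : R) : sMatrix θ 0 0 x = gammaMatrix x (θ x) := by
  simp [sMatrix, alphaMatrix_zero, betaMatrix_zero]

variable [CharP R 3]

lemma sMatrix_mul_sMatrix (hθ : ∀ x, θ (θ x) ^ 3 = x) (a b c a' b' c' : R) :
    sMatrix θ a b c * sMatrix θ a' b' c' =
      sMatrix θ (a + a') (b + b' - a * θ a' ^ 3)
        (c + c' - a' * b + a * θ a' ^ 3 * a' - a ^ 2 * θ a' ^ 3) := by
  simp only [sMatrix, alphaMatrix_mul_betaMatrix_mul_gammaMatrix_mul, map_add, map_sub, map_mul,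
    map_pow, hθ]

namespace ReeUnipotent

/-- The representation of the group of triples by the matrices `S(a, b, c)`. -/
def toGL (hθ : ∀ x, θ (θ x) ^ 3 = x) : ReeUnipotent θ →* GL (Fin 7) R :=
  MonoidHom.toHomUnits
    { toFun := fun u => sMatrix θ u.a u.b u.c
      map_one' := by simp [one_def, sMatrix_left, alphaMatrix_zero]
      map_mul' := fun _ _ => (sMatrix_mul_sMatrix hθ ..).symm }

lemma coe_toGL (hθ : ∀ x, θ (θ x) ^ 3 = x) (u : ReeUnipotent θ) :
    (toGL hθ u : Matrix (Fin 7) (Fin 7) R) = sMatrix θ u.a u.b u.c :=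
  rfl

lemma range_toGL (hθ : ∀ x, θ (θ x) ^ 3 = x) : (toGL hθ).range = unipotentGroup θ := by
  apply le_antisymm
  · rintro _ ⟨⟨a, b, c⟩, rfl⟩
    rw [mk_eq_mul, map_mul, map_mul]
    refine mul_mem (mul_mem ?_ ?_) ?_ <;> apply Subgroup.subset_closure
    · exact .inl ⟨a, sMatrix_left a⟩
    · exact .inr (.inl ⟨b, sMatrix_middle b⟩)
    · exact .inr (.inr ⟨c, sMatrix_right c⟩)
  · rw [unipotentGroup, Subgroup.closure_le]
    rintro g (⟨x, hx⟩ | ⟨x, hx⟩ | ⟨x, hx⟩)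
    · exact ⟨⟨x, 0, 0⟩, Units.ext ((sMatrix_left x).trans hx.symm)⟩
    · exact ⟨⟨0, x, 0⟩, Units.ext ((sMatrix_middle x).trans hx.symm)⟩
    · exact ⟨⟨0, 0, x⟩, Units.ext ((sMatrix_right x).trans hx.symm)⟩

end ReeUnipotent

end Representation

section PowerMap

variable {F : Type*} [Field F] {t : ℕ} {θ : F →+* F}

lemma amat_eq_alphaMatrix (hθ : ∀ x, θ x = x ^ t) (x : F) : amat t x = alphaMatrix x (θ x) := by
  simp only [amat, alphaMatrix, hθ, pow_add, pow_mul', pow_one]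

lemma bmat_eq_betaMatrix (hθ : ∀ x, θ x = x ^ t) (x : F) : bmat t x = betaMatrix x (θ x) := by
  simp only [bmat, betaMatrix, hθ, pow_add, pow_mul', pow_one]

lemma cmat_eq_gammaMatrix (hθ : ∀ x, θ x = x ^ t) (x : F) : cmat t x = gammaMatrix x (θ x) := by
  simp only [cmat, gammaMatrix, hθ, pow_mul']

lemma Smat_eq_sMatrix (hθ : ∀ x, θ x = x ^ t) (a b c : F) : Smat t a b c = sMatrix θ a b c := by
  simp only [Smat, sMatrix, amat_eq_alphaMatrix hθ, bmat_eq_betaMatrix hθ, cmat_eq_gammaMatrix hθ]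

lemma Usub_eq_unipotentGroup (hθ : ∀ x, θ x = x ^ t) : Usub t = unipotentGroup θ := by
  simp only [Usub, unipotentGroup, amat_eq_alphaMatrix hθ, bmat_eq_betaMatrix hθ,
    cmat_eq_gammaMatrix hθ]

end PowerMap

section FiniteField

variable {F : Type*} [Field F] [Fintype F]

lemma iterateFrobenius_ne_id {p m : ℕ} [ExpChar F p] (hlt : 1 < p ^ m)
    (hcard : p ^ m < Fintype.card F) : iterateFrobenius F p m ≠ RingHom.id F := by
  intro hid
  have hone : ∀ x : Fˣ, x ^ (p ^ m - 1) = 1 := fun x => by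
    have hx : (x : F) ^ p ^ m = x := DFunLike.congr_fun hid (x : F)
    have hx' : x ^ (p ^ m - 1) * x = 1 * x := by
      rw [pow_sub_one_mul (by omega), one_mul]
      exact Units.ext hx
    exact mul_right_cancel hx'
  have hdvd := (FiniteField.forall_pow_eq_one_iff F _).mp hone
  have := Nat.le_of_dvd (by omega) hdvd
  omega

lemma iterateFrobenius_iterateFrobenius_pow {p m : ℕ} [ExpChar F p]
    (hF : Fintype.card F = p ^ (2 * m + 1)) (x : F) :
    iterateFrobenius F p m (iterateFrobenius F p m x) ^ p = x := by
  have hcard : p ^ m * p ^ m * p = Fintype.card F := by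
    rw [hF]
    ring
  rw [iterateFrobenius_def, iterateFrobenius_def, ← pow_mul, ← pow_mul, ← mul_assoc, hcard,
    FiniteField.pow_card]

end FiniteField

section DerivedSubgroup

variable {K : Type*} [Field K] [CharP K 3] {θ : K →+* K}

lemma commutator_unipotentGroup (hθ : ∀ x, θ (θ x) ^ 3 = x) (hne : θ ≠ RingHom.id K) :
    ⁅unipotentGroup θ, unipotentGroup θ⁆ =
      (ReeUnipotent.aHom θ).ker.map (ReeUnipotent.toGL hθ) := by
  rw [← ReeUnipotent.range_toGL hθ, MonoidHom.range_eq_map, ← Subgroup.map_commutator,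
    ← commutator_def, ReeUnipotent.commutator_eq_ker_aHom hθ hne]

lemma mem_commutator_unipotentGroup (hθ : ∀ x, θ (θ x) ^ 3 = x) (hne : θ ≠ RingHom.id K)
    {g : GL (Fin 7) K} :
    g ∈ ⁅unipotentGroup θ, unipotentGroup θ⁆ ↔
      ∃ b c, ReeUnipotent.toGL hθ ⟨0, b, c⟩ = g := by
  rw [commutator_unipotentGroup hθ hne]
  constructor
  · rintro ⟨⟨a, b, c⟩, (rfl : a = 0), rfl⟩
    exact ⟨b, c, rfl⟩
  · rintro ⟨b, c, rfl⟩
    exact ⟨⟨0, b, c⟩, rfl, rfl⟩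

end DerivedSubgroup

end ReePaper

theorem usub_derived_general {K : Type*} [Field K] [CharP K 3] {θ : K →+* K}
    (hθ : ∀ x, θ (θ x) ^ 3 = x) (hne : θ ≠ RingHom.id K) :
    (∀ g : GL (Fin 7) K, g ∈ ⁅unipotentGroup θ, unipotentGroup θ⁆ ↔
      ∃ b c, (g : Matrix (Fin 7) (Fin 7) K) = sMatrix θ 0 b c) ∧
    (∀ g : GL (Fin 7) K, g ∈ ⁅unipotentGroup θ, unipotentGroup θ⁆ → g ≠ 1 → orderOf g = 3) := by
  simp only [mem_commutator_unipotentGroup hθ hne]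
  constructor
  · intro g
    simp only [Units.ext_iff, ReeUnipotent.coe_toGL, eq_comm]
  · rintro _ ⟨b, c, rfl⟩ hg
    have : Fact (Nat.Prime 3) := ⟨Nat.prime_three⟩
    refine orderOf_eq_prime ?_ hg
    rw [← map_pow, ReeUnipotent.mk_zero_pow_three, map_one]

/-- The derived subgroup of `U(q)` equals `{S(0,b,c) : b, c ∈ F_q}`, and every nontrivial
element of it has order 3. -/
theorem usub_derived (m : ℕ) (hm : 0 < m) (F : Type*) [Field F] [Fintype F]
    (hF : Fintype.card F = 3 ^ (2 * m + 1)) :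
    (∀ g : GL (Fin 7) F, g ∈ ⁅Usub (F := F) (3 ^ m), Usub (F := F) (3 ^ m)⁆ ↔
      ∃ b c : F, (g : Matrix (Fin 7) (Fin 7) F) = Smat (3 ^ m) 0 b c) ∧
    (∀ g : GL (Fin 7) F, g ∈ ⁅Usub (F := F) (3 ^ m), Usub (F := F) (3 ^ m)⁆ → g ≠ 1 →
      orderOf g = 3) := by
  have : Fact (Nat.Prime 3) := ⟨Nat.prime_three⟩
  have : CharP F 3 := charP_of_card_eq_prime_pow hF
  have hθ := iterateFrobenius_def (R := F) 3 m
  have hne : iterateFrobenius F 3 m ≠ RingHom.id F := by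
    apply iterateFrobenius_ne_id (Nat.one_lt_pow hm.ne' (by norm_num))
    rw [hF]
    exact Nat.pow_lt_pow_right (by norm_num) (by omega)
  simp only [Usub_eq_unipotentGroup hθ, Smat_eq_sMatrix hθ]
  exact usub_derived_general (iterateFrobenius_iterateFrobenius_pow hF) hne
end
end
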